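/- Let H and K be finitely generated subgroups of F(A) with d = rank(K) − rank(H) > 0. Then H is a free factor of K if and only if there exists 0 ≤ d' ≤ d such that Γ_A(H) can be transformed into Γ_A(K) by a sequence of d' i-steps followed by d − d' reduced expansions. -/

import Mathlib

open Function

/-- A letter of the symmetrized alphabet Ã: `(a, true)` stands for `a ∈ A` and
`(a, false)` for `a⁻¹ ∈ A⁻¹`. -/
abbrev Ltr (A : Type) := A × Bool

/-- Inversion of letters of Ã. -/
def Ltr.inv {A : Type} (x : Ltr A) : Ltr A := (x.1, !x.2)

/-- The inverse `u⁻¹` of a word `u` over Ã. -/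
def wordInv {A : Type} (w : List (Ltr A)) : List (Ltr A) := (w.map Ltr.inv).reverse

/-- A word over Ã is reduced iff it has no factor of the form `a a⁻¹` or `a⁻¹ a`. -/
def IsReducedWord {A : Type} (w : List (Ltr A)) : Prop :=
  ∀ (u v : List (Ltr A)) (a : A) (b : Bool), w ≠ u ++ (a, b) :: (a, !b) :: v

/-- An automaton over the symmetrized alphabet Ã, with a bundled state type `Q`,
an initial state `q0` and a set `E` of transitions. -/
structure Autom (A : Type) : Type 1 where
  Q : Type
  q0 : Q
  E : Set (Q × Ltr A × Q)

namespace Autom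

variable {A : Type}

/-- Paths using only transitions in the set `T`. -/
inductive PathOn (M : Autom A) (T : Set (M.Q × Ltr A × M.Q)) :
    M.Q → List (Ltr A) → M.Q → Prop
  | nil (q : M.Q) : PathOn M T q [] q
  | cons {p q r : M.Q} {a : Ltr A} {w : List (Ltr A)} :
      (p, a, q) ∈ T → PathOn M T q w r → PathOn M T p (a :: w) r

/-- `M.Path p u q` : the word `u` labels a path from state `p` to state `q` in `M`. -/
def Path (M : Autom A) : M.Q → List (Ltr A) → M.Q → Prop := M.PathOn M.E

/-- The language L(𝒜) of words labeling a path from `q0` to `q0`. -/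
def lang (M : Autom A) : Set (List (Ltr A)) := {w | M.Path M.q0 w M.q0}

/-- The set L(𝒜)ρ of reductions (in the free group `F(A)`) of words of L(𝒜). -/
def langRho (M : Autom A) : Set (FreeGroup A) := FreeGroup.mk '' M.lang

/-- Dual automaton: `(p,a,q)` is an edge iff `(q,a⁻¹,p)` is one. -/
def Dual (M : Autom A) : Prop := ∀ p a q, (p, a, q) ∈ M.E ↔ (q, Ltr.inv a, p) ∈ M.E

/-- Deterministic automaton. -/
def Deterministic (M : Autom A) : Prop :=
  ∀ p a q q', (p, a, q) ∈ M.E → (p, a, q') ∈ M.E → q = q'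

/-- Trim automaton: every state lies on a path from `q0` to `q0`. -/
def Trim (M : Autom A) : Prop := ∀ q, ∃ u v, M.Path M.q0 u q ∧ M.Path q v M.q0

/-- Inverse automaton: deterministic, trim and dual. -/
def IsInv (M : Autom A) : Prop := M.Deterministic ∧ M.Trim ∧ M.Dual

/-- Reduced automaton: every state lies on a path from `q0` to `q0` labeled by
a reduced word. -/
def IsRed (M : Autom A) : Prop :=
  ∀ q, ∃ u v, IsReducedWord (u ++ v) ∧ M.Path M.q0 u q ∧ M.Path q v M.q0

/-- Homomorphisms of automata. -/
def IsHom (M N : Autom A) (φ : M.Q → N.Q) : Prop :=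
  φ M.q0 = N.q0 ∧ ∀ p a q, (p, a, q) ∈ M.E → (φ p, a, φ q) ∈ N.E

/-- Isomorphism of automata. -/
def Isomorphic (M N : Autom A) : Prop :=
  ∃ φ : M.Q ≃ N.Q, M.IsHom N φ ∧ N.IsHom M φ.symm

/-- `N` is (isomorphic to) the automaton obtained from `M` by identifying the two
states `p` and `q`. -/
def IsIdentification (M : Autom A) (p q : M.Q) (N : Autom A) : Prop :=
  ∃ φ : M.Q → N.Q,
    Surjective φ ∧ φ M.q0 = N.q0 ∧
    (∀ x y, φ x = φ y ↔ x = y ∨ (x = p ∧ y = q) ∨ (x = q ∧ y = p)) ∧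
    (∀ e : N.Q × Ltr A × N.Q, e ∈ N.E ↔ ∃ e' ∈ M.E, e = (φ e'.1, e'.2.1, φ e'.2.2))

/-- `N` is (isomorphic to) the automaton obtained from `M` by deleting the state `q`
and all transitions involving it. -/
def IsDeletion (M : Autom A) (q : M.Q) (N : Autom A) : Prop :=
  ∃ φ : N.Q → M.Q,
    Injective φ ∧ Set.range φ = {x | x ≠ q} ∧ φ N.q0 = M.q0 ∧
    (∀ e : N.Q × Ltr A × N.Q, e ∈ N.E ↔ (φ e.1, e.2.1, φ e.2.2) ∈ M.E)

/-- Elementary reduction of type 1. -/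
def Red1 (M N : Autom A) : Prop :=
  ∃ p q r a, p ≠ q ∧ (r, a, p) ∈ M.E ∧ (r, a, q) ∈ M.E ∧ M.IsIdentification p q N

/-- Elementary reduction of type 2. -/
def Red2 (M N : Autom A) : Prop :=
  ∃ (p q : M.Q) (a : Ltr A), q ≠ M.q0 ∧ (p, a, q) ∈ M.E ∧ (q, Ltr.inv a, p) ∈ M.E ∧
    (∀ e ∈ M.E, e.1 = q ∨ e.2.2 = q → e = (p, a, q) ∨ e = (q, Ltr.inv a, p)) ∧
    M.IsDeletion q N

/-- `N` is (isomorphic to) the reduction `Mρ` of `M`: perform elementary reductions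
of type 1 until the automaton is deterministic, then elementary reductions of type 2
until none is possible. -/
def ReductionOf (M N : Autom A) : Prop :=
  ∃ M₁, Relation.ReflTransGen Red1 M M₁ ∧ M₁.Deterministic ∧
    Relation.ReflTransGen Red2 M₁ N ∧ ∀ N', ¬ Red2 N N'

/-- `N` is (isomorphic to) the expansion of `M` by `(p, w, q)`: a new path labeled `w`
from `p` to `q` (together with its inverse path) whose intermediate states are new. -/
def IsExpansion (M : Autom A) (p : M.Q) (w : List (Ltr A)) (q : M.Q) (N : Autom A) : Prop :=
  w ≠ [] ∧
  ∃ (φ : M.Q → N.Q) (c : Fin (w.length + 1) → N.Q),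
    Injective φ ∧ φ M.q0 = N.q0 ∧ c 0 = φ p ∧ c (Fin.last w.length) = φ q ∧
    (∀ i : Fin (w.length + 1), 0 < (i : ℕ) → (i : ℕ) < w.length → c i ∉ Set.range φ) ∧
    (∀ i j : Fin (w.length + 1), 0 < (i : ℕ) → (i : ℕ) < w.length → c i = c j → i = j) ∧
    (∀ x : N.Q, (∃ y, φ y = x) ∨ ∃ i, c i = x) ∧
    (∀ e : N.Q × Ltr A × N.Q, e ∈ N.E ↔
      ((∃ e' ∈ M.E, e = (φ e'.1, e'.2.1, φ e'.2.2)) ∨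
        ∃ i : Fin w.length,
          e = (c i.castSucc, w.get i, c i.succ) ∨
          e = (c i.succ, Ltr.inv (w.get i), c i.castSucc)))

/-- `M →exp^{(p,w,q)} N` : `N` is (isomorphic to) the reduction of the expansion
of `M` by `(p,w,q)`. -/
def ExpStep (M : Autom A) (p : M.Q) (w : List (Ltr A)) (q : M.Q) (N : Autom A) : Prop :=
  ∃ N' N'', M.IsExpansion p w q N' ∧ ReductionOf N' N'' ∧ Isomorphic N'' N

/-- `M →re^{(p,w,q)} N` : a reduced expansion, i.e. an expansion-then-reduction in which
`M` embeds in `N`. -/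
def REStep (M : Autom A) (p : M.Q) (w : List (Ltr A)) (q : M.Q) (N : Autom A) : Prop :=
  M.ExpStep p w q N ∧ ∃ ψ : M.Q → N.Q, Injective ψ ∧ M.IsHom N ψ

/-- `M →e^{w} N` : an e-step, i.e. `M →exp^{(q0,w,q0)} N`. -/
def EStep (M : Autom A) (w : List (Ltr A)) (N : Autom A) : Prop :=
  M.ExpStep M.q0 w M.q0 N

/-- `M →i^{p=q} N` : an i-step; `N` is (isomorphic to) the reduction of the automaton
obtained from `M` by identifying the distinct states `p` and `q`. -/
def IStep (M : Autom A) (p q : M.Q) (N : Autom A) : Prop :=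
  p ≠ q ∧ ∃ N' N'', M.IsIdentification p q N' ∧ ReductionOf N' N'' ∧ Isomorphic N'' N

/-- i-step, allowing `p = q` (in which case nothing happens). -/
def IStep' (M : Autom A) (p q : M.Q) (N : Autom A) : Prop :=
  (p = q ∧ M.Isomorphic N) ∨ M.IStep p q N

/-- `M →i N` : some i-step applies. -/
def IStepAny (M N : Autom A) : Prop := ∃ p q, M.IStep p q N

/-- Some reduced expansion (by a nonempty reduced word) applies. -/
def REStepAny (M N : Autom A) : Prop :=
  ∃ p w q, IsReducedWord w ∧ M.REStep p w q N

/-- `M` is (isomorphic to) `Γ_A(H)` : a reduced inverse automaton with `L(M)ρ = H`. -/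
def Represents (M : Autom A) (H : Subgroup (FreeGroup A)) : Prop :=
  M.IsInv ∧ M.IsRed ∧ M.langRho = ↑H

/-- The `q0`-diameter of an automaton: the maximum over all states `q` of the minimal
length of a reduced word labeling a path from `q0` to `q`. -/
noncomputable def diam (M : Autom A) : ℕ :=
  ⨆ q : M.Q, sInf {n | ∃ u, IsReducedWord u ∧ u.length = n ∧ M.Path M.q0 u q}

end Autom

/-- `S` is a basis of the subgroup `H`: `S` generates `H` and freely so. -/
def IsFreeBasis {G : Type} [Group G] (S : Set G) (H : Subgroup G) : Prop :=
  Subgroup.closure S = H ∧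
    Injective (FreeGroup.lift (Subtype.val : S → G) : FreeGroup S →* G)

/-- `H ≤ff K` : `H` is a free factor of `K`. -/
def FreeFactor {G : Type} [Group G] (H K : Subgroup G) : Prop :=
  ∃ B C : Set G, IsFreeBasis B H ∧ IsFreeBasis C K ∧ B ⊆ C

/-- The rank of a subgroup: the cardinality of a basis (the common value of
the cardinalities of all bases, when `H` is a finite-rank free group). -/
noncomputable def rk {G : Type} [Group G] (H : Subgroup G) : ℕ :=
  sInf {n | ∃ S : Set G, IsFreeBasis S H ∧ S.ncard = n}

/-- `L` is a graphical free factor of `K` with respect to `A`: `Γ_A(L)` embeds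
in `Γ_A(K)`. -/
def GraphicalFF {A : Type} (L K : Subgroup (FreeGroup A)) : Prop :=
  L ≤ K ∧ ∃ ML MK : Autom A, ML.Represents L ∧ MK.Represents K ∧
    ∃ ψ : ML.Q → MK.Q, Injective ψ ∧ ML.IsHom MK ψ

/-- A step (i-step or reduced expansion) from `M` to `N` of cost `c`. -/
def StepCost {A : Type} (M N : Autom A) (c : ℕ) : Prop :=
  (c = 0 ∧ Autom.IStepAny M N) ∨
  (∃ p w q, IsReducedWord w ∧ w.length = c ∧ M.REStep p w q N)

/-- The well-order `≺` on cost sequences. -/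
def costLT (k l : List ℕ) : Prop :=
  k.length < l.length ∨
  (k.length = l.length ∧ k.sum < l.sum) ∨
  (k.length = l.length ∧ k.sum = l.sum ∧ List.Lex (· < ·) k l)

/-!
The states of `Γ_A(L)` are the `L`-orbits of the *convex core* of `L`: the set of all elements of
`F(A)` lying on a geodesic of the Cayley tree between two elements of `L`. Passing from `L` to
`⟨L, g⟩` amounts to gluing the core to its translate by `g` along a shortest arc of the tree
joining them. If the arc has length `0`, two states of `Γ_A(L)` get identified, which is an i-step;
otherwise the arc becomes a new path of the automaton and nothing folds, which is a reduced
expansion.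

If `K` is generated over its free factor `H` by `d` elements, order the sequences of such generators
by their gluing costs, earlier costs weighing more. In a minimal sequence all zero costs come first,
because a positive cost followed by a zero cost can be exchanged for a smaller one. Conversely, each
step adjoins a single element, so `d` steps give a generating set of `K` that extends a basis of `H`
and has at most `rank K` elements; by the Hopfian property of free groups it is a basis of `K`.
-/

open FreeGroup (mk)
open Subgroup (zpowers)

section Words

variable {A : Type}

theorem Ltr.inv_inv (a : Ltr A) : a.inv.inv = a := by
  simp [Ltr.inv]

theorem mk_nil : mk ([] : List (Ltr A)) = 1 :=
  FreeGroup.one_eq_mk.symm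

theorem mk_append (u v : List (Ltr A)) : mk (u ++ v) = mk u * mk v :=
  FreeGroup.mul_mk.symm

theorem mk_cons (a : Ltr A) (w : List (Ltr A)) : mk (a :: w) = mk [a] * mk w :=
  mk_append [a] w

theorem mk_singleton_inv (a : Ltr A) : mk [a.inv] = (mk [a])⁻¹ :=
  (FreeGroup.inv_mk (L := [a])).symm

theorem mk_wordInv (w : List (Ltr A)) : mk (wordInv w) = (mk w)⁻¹ :=
  FreeGroup.inv_mk.symm

theorem wordInv_wordInv (w : List (Ltr A)) : wordInv (wordInv w) = w :=
  FreeGroup.invRev_invRev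

theorem wordInv_append (u v : List (Ltr A)) : wordInv (u ++ v) = wordInv v ++ wordInv u := by
  simp [wordInv]

theorem length_wordInv (w : List (Ltr A)) : (wordInv w).length = w.length :=
  FreeGroup.invRev_length

theorem isReducedWord_iff_isReduced {w : List (Ltr A)} :
    IsReducedWord w ↔ FreeGroup.IsReduced w := by
  rw [FreeGroup.isReduced_iff_not_step]
  constructor
  · rintro h _ ⟨⟩
    exact h _ _ _ _ rfl
  · rintro h u v a b rfl
    exact h _ FreeGroup.Red.Step.not

namespace IsReducedWord

variable {u v w : List (Ltr A)}

theorem singleton (a : Ltr A) : IsReducedWord [a] :=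
  isReducedWord_iff_isReduced.2 .singleton

theorem append_iff :
    IsReducedWord (u ++ v) ↔ IsReducedWord u ∧ IsReducedWord v ∧
      ∀ a ∈ u.getLast?, ∀ b ∈ v.head?, b ≠ a.inv := by
  have key (a b : Ltr A) : (a.1 = b.1 → a.2 = b.2) ↔ b ≠ a.inv := by
    obtain ⟨a, s⟩ := a
    obtain ⟨b, t⟩ := b
    cases s <;> cases t <;> simp [Ltr.inv, eq_comm]
  simp only [isReducedWord_iff_isReduced, FreeGroup.IsReduced, List.isChain_append, key]

theorem left (h : IsReducedWord (u ++ v)) : IsReducedWord u :=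
  (append_iff.1 h).1

theorem right (h : IsReducedWord (u ++ v)) : IsReducedWord v :=
  (append_iff.1 h).2.1

theorem append_or (hu : IsReducedWord u) (hv : IsReducedWord v) :
    IsReducedWord (u ++ v) ∨ ∃ u' a v', u = u' ++ [a] ∧ v = a.inv :: v' := by
  refine or_iff_not_imp_left.2 fun h => ?_
  simp only [append_iff, hu, hv, true_and, not_forall, not_not, exists_prop] at h
  obtain ⟨a, ha, b, hb, rfl⟩ := h
  obtain ⟨u', rfl⟩ := List.getLast?_eq_some_iff.1 ha
  obtain ⟨v', rfl⟩ := List.head?_eq_some_iff.1 hb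
  exact ⟨u', a, v', rfl, rfl⟩

theorem append_overlap (h : IsReducedWord (u ++ v)) (h' : IsReducedWord (v ++ w)) (hv : v ≠ []) :
    IsReducedWord (u ++ v ++ w) := by
  rw [isReducedWord_iff_isReduced] at *
  exact h.append_overlap h' hv

theorem wordInv (h : IsReducedWord w) : IsReducedWord (wordInv w) := by
  classical
  rw [isReducedWord_iff_isReduced, FreeGroup.isReduced_iff_reduce_eq] at *
  exact FreeGroup.reduce_invRev.trans (congrArg _ h)

theorem red_of_mk_eq (hw : IsReducedWord w) (h : mk u = mk w) : FreeGroup.Red u w := by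
  obtain ⟨z, huz, hwz⟩ := FreeGroup.Red.exact.1 h
  rwa [← (isReducedWord_iff_isReduced.1 hw).red_iff_eq.1 hwz]

theorem length_le_of_mk_eq (hw : IsReducedWord w) (h : mk u = mk w) : w.length ≤ u.length :=
  (hw.red_of_mk_eq h).length_le

/- The Cayley graph is a tree: every path passes through all vertices of the geodesic. -/
theorem exists_append_of_mk_eq (h : IsReducedWord (u ++ v)) (hw : mk w = mk (u ++ v)) :
    ∃ u' v', w = u' ++ v' ∧ mk u' = mk u := by
  obtain ⟨u', v', rfl, hu, -⟩ := FreeGroup.Red.to_append_iff.1 (h.red_of_mk_eq hw)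
  exact ⟨u', v', rfl, FreeGroup.Red.exact.2 ⟨u, hu, .refl⟩⟩

end IsReducedWord

theorem exists_isReducedWord_mk (g : FreeGroup A) : ∃ w, IsReducedWord w ∧ mk w = g := by
  classical
  exact ⟨g.toWord, isReducedWord_iff_isReduced.2 FreeGroup.isReduced_toWord, FreeGroup.mk_toWord⟩

end Words

section ConvexCore

variable {A : Type} {L L' : Subgroup (FreeGroup A)} {g h : FreeGroup A} {u v w : List (Ltr A)}

/-- The convex hull of `L` in the Cayley tree of `F(A)`: the vertices `g = l * mk u` lying on a
geodesic from `l ∈ L` to `l * mk (u ++ v) ∈ L`. The states of `Γ_A(L)` are its `L`-orbits. -/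
def convexCore (L : Subgroup (FreeGroup A)) : Set (FreeGroup A) :=
  {g | ∃ u v, IsReducedWord (u ++ v) ∧ mk (u ++ v) ∈ L ∧ g * (mk u)⁻¹ ∈ L}

theorem convexCore_mono (h : L ≤ L') : convexCore L ⊆ convexCore L' :=
  fun _ ⟨u, v, hred, huv, hg⟩ => ⟨u, v, hred, h huv, h hg⟩

theorem mul_mem_convexCore (hg : g ∈ L) (hh : h ∈ convexCore L) : g * h ∈ convexCore L := by
  obtain ⟨u, v, hred, huv, hu⟩ := hh
  exact ⟨u, v, hred, huv, by simpa only [mul_assoc] using mul_mem hg hu⟩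

theorem mk_mem_convexCore (hred : IsReducedWord (u ++ v)) (huv : mk (u ++ v) ∈ L) :
    mk u ∈ convexCore L :=
  ⟨u, v, hred, huv, by rw [mul_inv_cancel]; exact one_mem L⟩

theorem mem_convexCore_of_mem (hg : g ∈ L) : g ∈ convexCore L := by
  obtain ⟨w, hw, rfl⟩ := exists_isReducedWord_mk g
  exact mk_mem_convexCore (v := []) (by simpa) (by simpa)

theorem mem_convexCore_of_prefix (hred : IsReducedWord (u ++ v))
    (huv : mk (u ++ v) ∈ convexCore L) : mk u ∈ convexCore L := by
  obtain ⟨s, t, hst, hst_mem, hs⟩ := huv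
  obtain ⟨r, hr, hrs⟩ := exists_isReducedWord_mk (mk (u ++ v) * (mk s)⁻¹)
  obtain ⟨z, z', hz, hzu⟩ := hred.exists_append_of_mk_eq (w := r ++ s) (by
    rw [mk_append, hrs, inv_mul_cancel_right])
  rw [← hrs] at hs
  rw [← hzu]
  rcases List.append_eq_append_iff.1 hz with ⟨m, rfl, rfl⟩ | ⟨m, rfl, rfl⟩
  · rw [mk_append]
    refine mul_mem_convexCore hs (mk_mem_convexCore (v := z' ++ t) ?_ ?_)
    · simpa using hst
    · simpa using hst_mem
  · exact mk_mem_convexCore hr hs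

/- Walking along the words for the generators of a product never leaves `P`, and by
`IsReducedWord.exists_append_of_mk_eq` such a walk passes through the whole geodesic. -/
theorem convexCore_closure_subset {T P : Set (FreeGroup A)} (h1 : 1 ∈ P)
    (hP : ∀ g ∈ Subgroup.closure T, ∀ h ∈ P, g * h ∈ P)
    (hT : ∀ g ∈ T, ∃ w, mk w = g ∧ ∀ u v, w = u ++ v → mk u ∈ P) :
    convexCore (Subgroup.closure T) ⊆ P := by
  have walk : ∀ g ∈ Subgroup.closure T, ∃ w, mk w = g ∧ ∀ u v, w = u ++ v → mk u ∈ P := by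
    intro g hg
    induction hg using Subgroup.closure_induction with
    | mem g hg => exact hT g hg
    | one =>
      refine ⟨[], mk_nil, fun u v h => ?_⟩
      rwa [(List.append_eq_nil_iff.1 h.symm).1, mk_nil]
    | mul g g' hg _ ih ih' =>
      obtain ⟨w, rfl, hw⟩ := ih
      obtain ⟨w', rfl, hw'⟩ := ih'
      refine ⟨w ++ w', mk_append w w', fun u v h => ?_⟩
      rcases List.append_eq_append_iff.1 h with ⟨z, rfl, rfl⟩ | ⟨z, rfl, rfl⟩
      · rw [mk_append]
        exact hP _ hg _ (hw' z v rfl)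
      · exact hw u z rfl
    | inv g hg ih =>
      obtain ⟨w, rfl, hw⟩ := ih
      refine ⟨wordInv w, mk_wordInv w, fun u v h => ?_⟩
      have hu : mk u = (mk w)⁻¹ * mk (wordInv v) := by
        rw [← mk_wordInv w, h, mk_append, mk_wordInv v, mul_inv_cancel_right]
      rw [hu]
      refine hP _ (inv_mem hg) _ (hw _ (wordInv u) ?_)
      rw [← wordInv_append, ← h, wordInv_wordInv]
  rintro g ⟨u, v, hred, huv, hg⟩
  obtain ⟨w, hw, hwP⟩ := walk _ huv
  obtain ⟨u', v', hw', hu'⟩ := hred.exists_append_of_mk_eq hw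
  rw [← inv_mul_cancel_right g (mk u)]
  exact hP _ hg _ (hu' ▸ hwP u' v' hw')

end ConvexCore

section GluingCost

variable {A : Type} {L L' : Subgroup (FreeGroup A)} {g h k x y : FreeGroup A}
  {u v w p s r : List (Ltr A)}

/-- The distance in the Cayley tree between `convexCore L` and its translate by `g`: the least
length of an arc to be added to `Γ_A(L)` in order to adjoin `g` to `L`. -/
noncomputable def gluingCost (L : Subgroup (FreeGroup A)) (g : FreeGroup A) : ℕ :=
  sInf {n | ∃ x ∈ convexCore L, ∃ y ∈ convexCore L, ∃ w, g = x * mk w * y⁻¹ ∧ w.length = n}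

/-- `w` labels a shortest arc from `x ∈ convexCore L` to `g * y ∈ g * convexCore L`. -/
structure IsShortestArc (L : Subgroup (FreeGroup A)) (g x : FreeGroup A) (w : List (Ltr A))
    (y : FreeGroup A) : Prop where
  intro ::
  source_mem : x ∈ convexCore L
  target_mem : y ∈ convexCore L
  eq_mul : g = x * mk w * y⁻¹
  length_eq : w.length = gluingCost L g

theorem gluingCost_le (hx : x ∈ convexCore L) (hy : y ∈ convexCore L)
    (hg : g = x * mk w * y⁻¹) : gluingCost L g ≤ w.length :=
  Nat.sInf_le ⟨x, hx, y, hy, w, hg, rfl⟩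

theorem exists_isShortestArc (L : Subgroup (FreeGroup A)) (g : FreeGroup A) :
    ∃ x w y, IsShortestArc L g x w y := by
  have h1 : (1 : FreeGroup A) ∈ convexCore L := mem_convexCore_of_mem (one_mem L)
  obtain ⟨w, -, hw⟩ := exists_isReducedWord_mk g
  obtain ⟨x, hx, y, hy, w, hg, hl⟩ := Nat.sInf_mem
    (⟨w.length, 1, h1, 1, h1, w, by simp [hw], rfl⟩ :
      {n | ∃ x ∈ convexCore L, ∃ y ∈ convexCore L,
        ∃ w, g = x * mk w * y⁻¹ ∧ w.length = n}.Nonempty)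
  exact ⟨x, w, y, hx, hy, hg, hl⟩

theorem gluingCost_anti (h : L ≤ L') (g : FreeGroup A) : gluingCost L' g ≤ gluingCost L g := by
  obtain ⟨x, w, y, hx, hy, hg, hl⟩ := exists_isShortestArc L g
  exact hl ▸ gluingCost_le (convexCore_mono h hx) (convexCore_mono h hy) hg

theorem gluingCost_eq_zero_iff :
    gluingCost L g = 0 ↔ ∃ x ∈ convexCore L, ∃ y ∈ convexCore L, g = x * y⁻¹ := by
  constructor
  · intro h
    obtain ⟨x, w, y, hx, hy, hg, hl⟩ := exists_isShortestArc L g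
    obtain rfl := List.length_eq_zero_iff.1 (hl.trans h)
    exact ⟨x, hx, y, hy, by simpa [mk_nil] using hg⟩
  · rintro ⟨x, hx, y, hy, rfl⟩
    exact Nat.le_zero.1 (gluingCost_le (w := []) hx hy (by simp [mk_nil]))

namespace IsShortestArc

theorem inv (h : IsShortestArc L g x w y) : IsShortestArc L g⁻¹ y (wordInv w) x where
  source_mem := h.target_mem
  target_mem := h.source_mem
  eq_mul := by simp only [h.eq_mul, mk_wordInv, mul_inv_rev, inv_inv, mul_assoc]
  length_eq := by
    have le_inv (g : FreeGroup A) : gluingCost L g⁻¹ ≤ gluingCost L g := by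
      obtain ⟨x, w, y, hx, hy, hg, hl⟩ := exists_isShortestArc L g
      rw [← hl, ← length_wordInv]
      refine gluingCost_le hy hx ?_
      simp only [hg, mk_wordInv, mul_inv_rev, inv_inv, mul_assoc]
    rw [length_wordInv, h.length_eq]
    exact le_antisymm (by simpa using le_inv g⁻¹) (le_inv g)

theorem ne_nil (h : IsShortestArc L g x w y) (hg : 0 < gluingCost L g) : w ≠ [] := by
  rwa [← List.length_pos_iff, h.length_eq]

theorem isReducedWord (h : IsShortestArc L g x w y) : IsReducedWord w := by
  obtain ⟨z, hz, hzw⟩ := exists_isReducedWord_mk (mk w)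
  have hlen : w.length ≤ z.length := by
    rw [h.length_eq]
    exact gluingCost_le h.source_mem h.target_mem (by rw [hzw, ← h.eq_mul])
  rwa [← (hz.red_of_mk_eq hzw.symm).sublist.eq_of_length_le hlen]

theorem mul_mk_notMem {a : Ltr A} (h : IsShortestArc L g x (a :: w) y) :
    x * mk [a] ∉ convexCore L := by
  intro hxa
  have hle : gluingCost L g ≤ w.length :=
    gluingCost_le hxa h.target_mem (by simp only [h.eq_mul, mk_cons a w, mul_assoc])
  rw [← h.length_eq] at hle
  exact absurd hle (by simp)

theorem isReducedWord_append (h : IsShortestArc L g (mk u) w y) (hu : IsReducedWord u) :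
    IsReducedWord (u ++ w) := by
  refine (hu.append_or h.isReducedWord).resolve_right ?_
  rintro ⟨u', a, w', rfl, rfl⟩
  refine h.mul_mk_notMem ?_
  rw [mk_append, mk_singleton_inv, mul_inv_cancel_right]
  exact mem_convexCore_of_prefix hu h.source_mem

theorem isReducedWord_append_wordInv (h : IsShortestArc L g x w (mk v)) (hv : IsReducedWord v) :
    IsReducedWord (w ++ wordInv v) := by
  simpa only [wordInv_append, wordInv_wordInv] using (h.inv.isReducedWord_append hv).wordInv

theorem mk_mem_or_of_append_eq (h : IsShortestArc L g (mk u) w (mk v)) (hu : IsReducedWord u)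
    (hv : IsReducedWord v) (hpr : u ++ (w ++ wordInv v) = p ++ r) :
    mk p ∈ convexCore L ∨ g⁻¹ * mk p ∈ convexCore L ∨
      ∃ p' r', w = p' ++ r' ∧ r' ≠ [] ∧ mk p = mk u * mk p' := by
  have target {m} (hv' : wordInv v = m ++ r) (hp : p = u ++ (w ++ m)) :
      g⁻¹ * mk p ∈ convexCore L := by
    have hv'' : v = wordInv r ++ wordInv m := by rw [← wordInv_append, ← hv', wordInv_wordInv]
    have hp' : g⁻¹ * mk p = mk (wordInv r) := by
      rw [h.eq_mul, hp, hv'']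
      simp only [mk_append, mk_wordInv]
      group
    rw [hp']
    exact mem_convexCore_of_prefix (hv'' ▸ hv) (hv'' ▸ h.target_mem)
  rcases List.append_eq_append_iff.1 hpr with ⟨m, hp, hm⟩ | ⟨m, hu', -⟩
  · rcases List.append_eq_append_iff.1 hm with ⟨m', rfl, hm'⟩ | ⟨m', hw, hr⟩
    · exact .inr (.inl (target hm' hp))
    · rcases eq_or_ne m' [] with rfl | hm'
      · exact .inr (.inl (target (m := []) hr.symm (by simpa [hw] using hp)))
      · exact .inr (.inr ⟨m, m', hw, hm', by rw [hp, mk_append]⟩)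
  · exact .inl (mem_convexCore_of_prefix (hu' ▸ hu) (hu' ▸ h.source_mem))

theorem exists_mul_mem_of_mem_convexCore_sup (h : IsShortestArc L g x w y)
    (hk : k ∈ convexCore (L ⊔ zpowers g)) :
    ∃ l ∈ L ⊔ zpowers g,
      l * k ∈ convexCore L ∨ ∃ p r, w = p ++ r ∧ r ≠ [] ∧ l * k = x * mk p := by
  set P : Set (FreeGroup A) := {k | ∃ l ∈ L ⊔ zpowers g,
    l * k ∈ convexCore L ∨ ∃ p r, w = p ++ r ∧ r ≠ [] ∧ l * k = x * mk p}
  have core_sub {k} (hk : k ∈ convexCore L) : k ∈ P := ⟨1, one_mem _, by simp [hk]⟩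
  have mul_mem_P {l k} (hl : l ∈ L ⊔ zpowers g) (hk : k ∈ P) : l * k ∈ P := by
    obtain ⟨l', hl', hk⟩ := hk
    exact ⟨l' * l⁻¹, mul_mem hl' (inv_mem hl), by simpa only [mul_assoc, inv_mul_cancel_left]⟩
  have hg : g⁻¹ ∈ L ⊔ zpowers g :=
    inv_mem (Subgroup.mem_sup_right (Subgroup.mem_zpowers g))
  have hsup : L ⊔ zpowers g = Subgroup.closure (L ∪ {g}) := by
    rw [Subgroup.closure_union, Subgroup.closure_eq, Subgroup.zpowers_eq_closure]
  suffices convexCore (Subgroup.closure (L ∪ {g})) ⊆ P from this (hsup ▸ hk)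
  refine convexCore_closure_subset (core_sub (mem_convexCore_of_mem (one_mem L)))
    (fun l hl k hk => mul_mem_P (hsup ▸ hl) hk) ?_
  rintro l (hl | rfl)
  · obtain ⟨t, ht, rfl⟩ := exists_isReducedWord_mk l
    refine ⟨t, rfl, ?_⟩
    rintro p r rfl
    exact core_sub (mk_mem_convexCore ht hl)
  · obtain ⟨u, hu, rfl⟩ := exists_isReducedWord_mk x
    obtain ⟨v, hv, rfl⟩ := exists_isReducedWord_mk y
    refine ⟨u ++ (w ++ wordInv v), by rw [h.eq_mul, mk_append, mk_append, mk_wordInv, mul_assoc],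
      fun p r hpr => ?_⟩
    rcases h.mk_mem_or_of_append_eq hu hv hpr with hp | hp | ⟨p', r', hw, hr, hp⟩
    · exact core_sub hp
    · exact ⟨_, hg, .inl hp⟩
    · exact ⟨1, one_mem _, .inr ⟨p', r', hw, hr, by rw [one_mul, hp]⟩⟩

end IsShortestArc

theorem sup_zpowers_mul_mul {G : Type*} [Group G] {L : Subgroup G} {a b : G} (ha : a ∈ L)
    (hb : b ∈ L) (g : G) : L ⊔ zpowers (a * g * b) = L ⊔ zpowers g := by
  have le {a b : G} (ha : a ∈ L) (hb : b ∈ L) (g : G) :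
      L ⊔ zpowers (a * g * b) ≤ L ⊔ zpowers g := by
    refine sup_le le_sup_left (Subgroup.zpowers_le.2 ?_)
    exact mul_mem (mul_mem (Subgroup.mem_sup_left ha)
      (Subgroup.mem_sup_right (Subgroup.mem_zpowers g))) (Subgroup.mem_sup_left hb)
  refine le_antisymm (le ha hb g) ?_
  simpa [mul_assoc] using le (inv_mem ha) (inv_mem hb) (a * g * b)

/-- The generators `g, k` of an extension of `L` can be traded for a pair whose costs are no
larger in total and are shifted towards the second generator. -/
def HasCheaperExchange (L : Subgroup (FreeGroup A)) (g k : FreeGroup A) : Prop :=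
  ∃ g' k', L ⊔ zpowers g' ⊔ zpowers k' = L ⊔ zpowers g ⊔ zpowers k ∧
    gluingCost L g' + gluingCost (L ⊔ zpowers g') k' ≤ gluingCost L g ∧
    gluingCost L g' < gluingCost L g

theorem HasCheaperExchange.congr {k' : FreeGroup A} (h : HasCheaperExchange L g k)
    (hk : L ⊔ zpowers g ⊔ zpowers k = L ⊔ zpowers g ⊔ zpowers k') : HasCheaperExchange L g k' := by
  rwa [HasCheaperExchange, ← hk]

theorem HasCheaperExchange.of_inv (h : HasCheaperExchange L g k⁻¹) : HasCheaperExchange L g k :=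
  h.congr (by rw [Subgroup.zpowers_inv])

theorem hasCheaperExchange_of_gluingCost_eq_zero (hg : 0 < gluingCost L g)
    (hk : gluingCost L k = 0) : HasCheaperExchange L g k :=
  ⟨k, g, sup_right_comm .., by simpa [hk] using gluingCost_anti le_sup_left g, hk ▸ hg⟩

namespace IsShortestArc

theorem hasCheaperExchange_of_mem (h : IsShortestArc L g x w y) (hw : w = p ++ r) (hr : r ≠ [])
    (hk : k ∈ convexCore L) : HasCheaperExchange L g (x * mk p * k⁻¹) := by
  set z := x * mk p * k⁻¹ with hz
  have hz_mem : z ∈ L ⊔ zpowers z := Subgroup.mem_sup_right (Subgroup.mem_zpowers z)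
  have hzg : z⁻¹ * g * 1 = k * mk r * y⁻¹ := by
    rw [h.eq_mul, hw, hz, mk_append]
    group
  have hcost_z : gluingCost L z ≤ p.length := gluingCost_le h.source_mem hk hz
  have hcost : gluingCost (L ⊔ zpowers z) (z⁻¹ * g * 1) ≤ r.length :=
    (gluingCost_anti le_sup_left _).trans (gluingCost_le hk h.target_mem hzg)
  have hlen : p.length + r.length = gluingCost L g := by
    rw [← h.length_eq, hw, List.length_append]
  have hr' : 0 < r.length := List.length_pos_iff.2 hr
  refine ⟨z, z⁻¹ * g * 1, ?_, by omega, by omega⟩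
  rw [sup_zpowers_mul_mul (inv_mem hz_mem) (one_mem _), sup_right_comm]

theorem mul_mk_mem_convexCore (h : IsShortestArc L g x w y) (hp : p <+: w) (hr : r <:+ w)
    (hpr : IsReducedWord (p ++ r)) (hL : L ≤ L') (hmem : x * mk p * mk r * y⁻¹ ∈ L') :
    x * mk p ∈ convexCore L' := by
  obtain ⟨u, hu, rfl⟩ := exists_isReducedWord_mk x
  obtain ⟨v, hv, rfl⟩ := exists_isReducedWord_mk y
  rcases eq_or_ne p [] with rfl | hp_ne
  · simpa [mk_nil] using convexCore_mono hL h.source_mem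
  rcases eq_or_ne r [] with rfl | hr_ne
  · have := mul_mem_convexCore hmem (convexCore_mono hL h.target_mem)
    simpa only [mk_nil, mul_one, inv_mul_cancel_right] using this
  obtain ⟨p', hp⟩ := hp
  obtain ⟨r', hr⟩ := hr
  have hup : IsReducedWord (u ++ p) := by
    have := h.isReducedWord_append hu
    rw [← hp, ← List.append_assoc] at this
    exact this.left
  have hrv : IsReducedWord (r ++ wordInv v) := by
    have := h.isReducedWord_append_wordInv hv
    rw [← hr, List.append_assoc] at this
    exact this.right
  have hred : IsReducedWord (u ++ p ++ (r ++ wordInv v)) := by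
    rw [← List.append_assoc]
    exact (hup.append_overlap hpr hp_ne).append_overlap hrv hr_ne
  rw [← mk_append]
  refine mk_mem_convexCore hred ?_
  simpa only [mk_append, mk_wordInv, mul_assoc] using hmem

theorem hasCheaperExchange_of_isReducedWord (h : IsShortestArc L g x w y) (hw : w = p ++ s ++ r)
    (hs : s ≠ []) (hpr : IsReducedWord (p ++ r)) :
    HasCheaperExchange L g (x * mk p * (x * mk (p ++ s))⁻¹) := by
  set z := x * mk p * (x * mk (p ++ s))⁻¹ with hz
  set g' := z * g * 1 with hg'
  have hz_mem : z ∈ L ⊔ zpowers z := Subgroup.mem_sup_right (Subgroup.mem_zpowers z)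
  have hg'_mem : g' ∈ L ⊔ zpowers g' := Subgroup.mem_sup_right (Subgroup.mem_zpowers g')
  have hg'_eq : g' = x * mk p * mk r * y⁻¹ := by
    rw [hg', h.eq_mul, hw, hz]
    simp only [mk_append]
    group
  have hcore : x * mk p ∈ convexCore (L ⊔ zpowers g') :=
    h.mul_mk_mem_convexCore ⟨s ++ r, by simp [hw]⟩ ⟨p ++ s, hw.symm⟩ hpr le_sup_left
      (hg'_eq ▸ hg'_mem)
  have hcost_z : gluingCost (L ⊔ zpowers g') z ≤ (wordInv s).length := by
    refine gluingCost_le hcore hcore ?_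
    rw [hz, mk_append, mk_wordInv]
    group
  have hcost : gluingCost L g' ≤ (p ++ r).length :=
    gluingCost_le h.source_mem h.target_mem (by rw [hg'_eq, mk_append, mul_assoc x])
  have hlen : p.length + s.length + r.length = gluingCost L g := by
    rw [← h.length_eq, hw, List.length_append, List.length_append]
  have hs' : 0 < s.length := List.length_pos_iff.2 hs
  rw [length_wordInv] at hcost_z
  rw [List.length_append] at hcost
  refine ⟨g', z, ?_, by omega, by omega⟩
  rw [sup_right_comm, sup_zpowers_mul_mul hz_mem (one_mem _), sup_right_comm]

/- If `p ++ r` is not reduced, the last letter of `p` cancels the first letter of `r` and both can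
be absorbed into the loop `s`. -/
theorem hasCheaperExchange_of_loop {p s r : List (Ltr A)} (h : IsShortestArc L g x w y)
    (hw : w = p ++ s ++ r) (hs : s ≠ []) :
    HasCheaperExchange L g (x * mk p * (x * mk (p ++ s))⁻¹) := by
  have hw_red : IsReducedWord (p ++ s ++ r) := hw ▸ h.isReducedWord
  rcases hw_red.left.left.append_or hw_red.right with hpr | ⟨p', a, r', hp, rfl⟩
  · exact h.hasCheaperExchange_of_isReducedWord hw hs hpr
  · have hloop := h.hasCheaperExchange_of_loop (p := p') (s := a :: s ++ [a.inv]) (r := r')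
      (by simpa [hp] using hw) (by simp)
    convert hloop using 1
    subst hp
    simp only [List.cons_append, mk_append, mk_cons a (s ++ _), mk_singleton_inv]
    group
termination_by p.length
decreasing_by simp [hp]

end IsShortestArc

theorem hasCheaperExchange_of_gluingCost_sup_eq_zero (hg : 0 < gluingCost L g)
    (hk : k ∉ L ⊔ zpowers g) (hk0 : gluingCost (L ⊔ zpowers g) k = 0) :
    HasCheaperExchange L g k := by
  obtain ⟨x, w, y, h⟩ := exists_isShortestArc L g
  obtain ⟨a, ha, b, hb, rfl⟩ := gluingCost_eq_zero_iff.1 hk0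
  obtain ⟨l, hl, ha⟩ := h.exists_mul_mem_of_mem_convexCore_sup ha
  obtain ⟨m, hm, hb⟩ := h.exists_mul_mem_of_mem_convexCore_sup hb
  have hab : l * (a * b⁻¹) * m⁻¹ = l * a * (m * b)⁻¹ := by group
  have hsup := sup_zpowers_mul_mul hl (inv_mem hm) (a * b⁻¹)
  refine HasCheaperExchange.congr ?_ hsup
  have hne : l * a ≠ m * b := by
    intro e
    refine hk ?_
    have : a * b⁻¹ = l⁻¹ * m := by rw [eq_inv_mul_iff_mul_eq, ← mul_assoc, e]; group
    exact this ▸ mul_mem (inv_mem hl) hm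
  rw [hab]
  generalize l * a = a', m * b = b' at ha hb hne
  rcases ha with ha | ⟨p, r, hw, hr, rfl⟩ <;> rcases hb with hb | ⟨p', r', hw', hr', rfl⟩
  · exact hasCheaperExchange_of_gluingCost_eq_zero hg (gluingCost_eq_zero_iff.2 ⟨_, ha, _, hb, rfl⟩)
  · refine .of_inv ?_
    rw [mul_inv_rev, inv_inv]
    exact h.hasCheaperExchange_of_mem hw' hr' ha
  · exact h.hasCheaperExchange_of_mem hw hr hb
  · rcases List.append_eq_append_iff.1 (hw'.symm.trans hw) with ⟨s, rfl, rfl⟩ | ⟨s, rfl, rfl⟩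
    · refine .of_inv ?_
      rw [mul_inv_rev, inv_inv]
      exact h.hasCheaperExchange_of_loop (by simpa) (by rintro rfl; simp at hne)
    · exact h.hasCheaperExchange_of_loop (by simpa) (by rintro rfl; simp at hne)

end GluingCost

section OptimalSequences

variable {A : Type} {L : Subgroup (FreeGroup A)} {g k : FreeGroup A} {gs : List (FreeGroup A)}

/-- The subgroup generated by `L` and the elements of a list, adjoined one at a time. -/
def adjoinList (L : Subgroup (FreeGroup A)) (gs : List (FreeGroup A)) : Subgroup (FreeGroup A) :=
  gs.foldl (fun L g => L ⊔ zpowers g) L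

theorem adjoinList_cons : adjoinList L (g :: gs) = adjoinList (L ⊔ zpowers g) gs :=
  rfl

theorem adjoinList_eq_sup_closure :
    adjoinList L gs = L ⊔ Subgroup.closure {g | g ∈ gs} := by
  induction gs generalizing L with
  | nil => simp [adjoinList]
  | cons g gs ih =>
    have hset : {x | x ∈ g :: gs} = {g} ∪ {x | x ∈ gs} := by ext; simp
    rw [adjoinList_cons, ih, hset, Subgroup.closure_union, Subgroup.zpowers_eq_closure, sup_assoc]

/-- The weighted total cost of adjoining a list of elements to `L` one at a time. Earlier costs
weigh more, so that an exchange as in `HasCheaperExchange` decreases the total. -/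
noncomputable def gluingWeight : Subgroup (FreeGroup A) → List (FreeGroup A) → ℕ
  | _, [] => 0
  | L, g :: gs => (gs.length + 1) * gluingCost L g + gluingWeight (L ⊔ zpowers g) gs

/-- The list `gs` has least length, and then least weight, among the lists generating the same
subgroup over `L`. -/
def IsOptimalSequence (L : Subgroup (FreeGroup A)) (gs : List (FreeGroup A)) : Prop :=
  ∀ hs, adjoinList L hs = adjoinList L gs →
    toLex (gs.length, gluingWeight L gs) ≤ toLex (hs.length, gluingWeight L hs)

theorem exists_isOptimalSequence (L : Subgroup (FreeGroup A)) (gs : List (FreeGroup A)) :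
    ∃ hs, adjoinList L hs = adjoinList L gs ∧ IsOptimalSequence L hs := by
  obtain ⟨hs, hhs, hmin⟩ := exists_minimalFor_of_wellFoundedLT
    (fun hs => adjoinList L hs = adjoinList L gs)
    (fun hs => toLex (hs.length, gluingWeight L hs)) ⟨gs, rfl⟩
  exact ⟨hs, hhs, fun ks hks => (le_total _ _).elim id (hmin (hks.trans hhs))⟩

namespace IsOptimalSequence

theorem length_le (h : IsOptimalSequence L gs) {hs : List (FreeGroup A)}
    (hhs : adjoinList L hs = adjoinList L gs) : gs.length ≤ hs.length :=
  Prod.Lex.monotone_fst _ _ (h hs hhs)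

theorem tail (h : IsOptimalSequence L (g :: gs)) : IsOptimalSequence (L ⊔ zpowers g) gs := by
  intro hs hhs
  have := h (g :: hs) hhs
  simp only [Prod.Lex.toLex_le_toLex, List.length_cons, gluingWeight] at this ⊢
  rcases this with hlt | ⟨heq, hle⟩
  · exact .inl (by omega)
  · have hlen : gs.length = hs.length := by omega
    rw [hlen] at hle
    exact .inr ⟨hlen, by omega⟩

theorem head_notMem (h : IsOptimalSequence L (g :: gs)) : g ∉ L := by
  intro hg
  have hsup : L ⊔ zpowers g = L := sup_eq_left.2 (Subgroup.zpowers_le.2 hg)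
  exact (h.length_le (by rw [adjoinList_cons, hsup])).not_gt gs.length.lt_succ_self

theorem gluingCost_pos (h : IsOptimalSequence L (g :: k :: gs)) (hg : 0 < gluingCost L g) :
    0 < gluingCost (L ⊔ zpowers g) k := by
  by_contra! hk
  have hk0 : gluingCost (L ⊔ zpowers g) k = 0 := by omega
  obtain ⟨g', k', hsup, hle, hlt⟩ :=
    hasCheaperExchange_of_gluingCost_sup_eq_zero hg h.tail.head_notMem hk0
  have := h (g' :: k' :: gs) (by simp only [adjoinList_cons, hsup])
  simp only [Prod.Lex.toLex_le_toLex, List.length_cons, gluingWeight, hsup, hk0] at this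
  rcases this with hlt | ⟨-, hle'⟩
  · exact hlt.false
  · nlinarith

end IsOptimalSequence

end OptimalSequences

namespace Autom

section Paths

variable {A : Type} {M N : Autom A} {p q r : M.Q} {a : Ltr A} {u v w : List (Ltr A)}

theorem path_nil_iff : M.Path p [] q ↔ p = q :=
  ⟨fun h => by cases h; rfl, fun h => h ▸ PathOn.nil p⟩

theorem path_cons_iff : M.Path p (a :: w) r ↔ ∃ q, (p, a, q) ∈ M.E ∧ M.Path q w r :=
  ⟨fun h => by cases h; exact ⟨_, ‹_›, ‹_›⟩, fun ⟨_, he, h⟩ => PathOn.cons he h⟩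

theorem path_singleton_iff : M.Path p [a] q ↔ (p, a, q) ∈ M.E := by
  simp [path_cons_iff, path_nil_iff]

theorem path_append_iff {p r : M.Q} :
    M.Path p (u ++ v) r ↔ ∃ q, M.Path p u q ∧ M.Path q v r := by
  induction u generalizing p with
  | nil => simp [path_nil_iff]
  | cons a u ih =>
    simp only [List.cons_append, path_cons_iff, ih]
    exact ⟨fun ⟨s, he, q, hu, hv⟩ => ⟨q, ⟨s, he, hu⟩, hv⟩,
      fun ⟨q, ⟨s, he, hu⟩, hv⟩ => ⟨s, he, q, hu, hv⟩⟩

theorem Path.append (hu : M.Path p u q) (hv : M.Path q v r) : M.Path p (u ++ v) r :=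
  path_append_iff.2 ⟨q, hu, hv⟩

theorem Path.inv {p q : M.Q} (hM : M.Dual) (h : M.Path p w q) : M.Path q (wordInv w) p := by
  induction w generalizing p with
  | nil => exact path_nil_iff.2 (path_nil_iff.1 h).symm
  | cons a w ih =>
    obtain ⟨r, he, hw⟩ := path_cons_iff.1 h
    rw [← List.singleton_append, wordInv_append]
    exact (ih hw).append (path_singleton_iff.2 ((hM _ _ _).1 he))

theorem IsHom.path {φ : M.Q → N.Q} (hφ : M.IsHom N φ) {p q : M.Q} (h : M.Path p w q) :
    N.Path (φ p) w (φ q) := by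
  induction h with
  | nil q => exact path_nil_iff.2 rfl
  | cons he _ ih => exact path_cons_iff.2 ⟨_, hφ.2 _ _ _ he, ih⟩

theorem Path.unique (hM : M.Deterministic) {p q q' : M.Q} (h : M.Path p w q)
    (h' : M.Path p w q') : q = q' := by
  induction h with
  | nil q => exact path_nil_iff.1 h'
  | cons he _ ih =>
    obtain ⟨s, he', h'⟩ := path_cons_iff.1 h'
    exact ih (hM _ _ _ _ he' he ▸ h')

theorem Path.of_red (hM : M.Dual) (hdet : M.Deterministic) (hr : FreeGroup.Red u v)
    (h : M.Path p u q) : M.Path p v q := by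
  induction hr with
  | refl => exact h
  | tail _ hstep ih =>
    cases hstep with
    | @not L₁ L₂ x b =>
      obtain ⟨r, h₁, h₂⟩ := path_append_iff.1 ih
      obtain ⟨s, he, h₂⟩ := path_cons_iff.1 h₂
      obtain ⟨t, he', h₂⟩ := path_cons_iff.1 h₂
      obtain rfl : r = t := hdet _ _ _ _ ((hM _ _ _).1 he) he'
      exact h₁.append h₂

end Paths

section Recognizes

variable {A : Type} {M N : Autom A} {L L' : Subgroup (FreeGroup A)} {p q : M.Q} {a : Ltr A}
  {u v w : List (Ltr A)}

/-- Every state can be reached from the initial state; for a dual automaton this is trimness. -/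
def Connected (M : Autom A) : Prop := ∀ q, ∃ u, M.Path M.q0 u q

/-- The set `L(𝒜)ρ` of a dual automaton, as a subgroup of `F(A)`. -/
def langSubgroup (M : Autom A) (hM : M.Dual) : Subgroup (FreeGroup A) where
  carrier := M.langRho
  one_mem' := ⟨[], path_nil_iff.2 rfl, mk_nil⟩
  mul_mem' := by
    rintro _ _ ⟨u, hu, rfl⟩ ⟨v, hv, rfl⟩
    exact ⟨u ++ v, hu.append hv, mk_append u v⟩
  inv_mem' := by
    rintro _ ⟨u, hu, rfl⟩
    exact ⟨wordInv u, hu.inv hM, mk_wordInv u⟩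

/-- The dual connected automaton `M` satisfies `L(M)ρ = L`. -/
structure Recognizes (M : Autom A) (L : Subgroup (FreeGroup A)) : Prop where
  dual : M.Dual
  connected : M.Connected
  langRho_eq : M.langRho = L

theorem Connected.trim (hc : M.Connected) (hM : M.Dual) : M.Trim :=
  fun q => let ⟨u, hu⟩ := hc q; ⟨u, wordInv u, hu, hu.inv hM⟩

theorem Represents.recognizes (h : M.Represents L) : M.Recognizes L :=
  ⟨h.1.2.2, fun q => let ⟨u, _, hu, _⟩ := h.1.2.1 q; ⟨u, hu⟩, h.2.2⟩

theorem Recognizes.represents (h : M.Recognizes L) (hdet : M.Deterministic) (hred : M.IsRed) :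
    M.Represents L :=
  ⟨⟨hdet, h.connected.trim h.dual, h.dual⟩, hred, h.langRho_eq⟩

theorem Recognizes.unique {L' : Subgroup (FreeGroup A)} (h : M.Recognizes L)
    (h' : M.Recognizes L') : L = L' :=
  SetLike.coe_injective (h.langRho_eq.symm.trans h'.langRho_eq)

theorem Recognizes.mk_mem (h : M.Recognizes L) (hu : M.Path M.q0 u M.q0) : FreeGroup.mk u ∈ L :=
  (Set.ext_iff.1 h.langRho_eq _).1 ⟨u, hu, rfl⟩

theorem Recognizes.mk_mul_mk_inv_mem (h : M.Recognizes L) (hu : M.Path M.q0 u q)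
    (hv : M.Path M.q0 v q) : FreeGroup.mk u * (FreeGroup.mk v)⁻¹ ∈ L := by
  rw [← mk_wordInv, ← mk_append]
  exact h.mk_mem (hu.append (hv.inv h.dual))

theorem Recognizes.exists_path (h : M.Recognizes L) {g : FreeGroup A} (hg : g ∈ L) :
    ∃ u, M.Path M.q0 u M.q0 ∧ FreeGroup.mk u = g :=
  (Set.ext_iff.1 h.langRho_eq g).2 hg

/-- A labelling of states by left cosets of `L` that is compatible with the transitions: if
`M.Path M.q0 u q` then `q` is labelled `(mk u)⁻¹ L`. It certifies that `L(M)ρ ⊆ L`. -/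
structure IsCosetLabelling (M : Autom A) (L : Subgroup (FreeGroup A))
    (T : M.Q → FreeGroup A ⧸ L) : Prop where
  initial : T M.q0 = (1 : FreeGroup A)
  edge : ∀ p a q, (p, a, q) ∈ M.E → FreeGroup.mk [a] • T q = T p

namespace IsCosetLabelling

variable {T : M.Q → FreeGroup A ⧸ L}

theorem smul_of_path (hT : M.IsCosetLabelling L T) {p q : M.Q} (h : M.Path p u q) :
    FreeGroup.mk u • T q = T p := by
  induction h with
  | nil q => exact one_smul _ _
  | @cons p q r a w he _ ih => rw [mk_cons a w, mul_smul, ih, hT.edge _ _ _ he]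

theorem eq_inv_of_path (hT : M.IsCosetLabelling L T) (h : M.Path M.q0 u q) :
    T q = ((FreeGroup.mk u)⁻¹ : FreeGroup A) := by
  rw [eq_inv_smul_iff.2 (hT.smul_of_path h), hT.initial, MulAction.Quotient.smul_coe,
    smul_eq_mul, mul_one]

theorem langRho_subset (hT : M.IsCosetLabelling L T) : M.langRho ⊆ L := by
  rintro _ ⟨u, hu, rfl⟩
  have := (hT.eq_inv_of_path hu).symm.trans hT.initial
  rwa [QuotientGroup.eq, inv_inv, mul_one] at this

theorem recognizes (hT : M.IsCosetLabelling L T) (hM : M.Dual) (hc : M.Connected)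
    (hL : L ≤ M.langSubgroup hM) : M.Recognizes L :=
  ⟨hM, hc, hT.langRho_subset.antisymm hL⟩

end IsCosetLabelling

theorem Recognizes.exists_isCosetLabelling (h : M.Recognizes L) (hL : L ≤ L') :
    ∃ T, M.IsCosetLabelling L' T := by
  choose u hu using h.connected
  refine ⟨fun q => ((FreeGroup.mk (u q))⁻¹ : FreeGroup A), ?_, fun p a q he => ?_⟩
  · rw [QuotientGroup.eq, inv_inv, mul_one]
    exact hL (h.mk_mem (hu _))
  · rw [MulAction.Quotient.smul_coe, smul_eq_mul, eq_comm, QuotientGroup.eq, inv_inv,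
      ← mul_assoc, ← mk_append]
    exact hL (h.mk_mul_mk_inv_mem ((hu p).append (path_singleton_iff.2 he)) (hu q))

theorem Connected.of_surjective (hc : M.Connected) {φ : M.Q → N.Q} (hφ : Surjective φ)
    (h0 : φ M.q0 = N.q0)
    (hE : ∀ p a q, (p, a, q) ∈ M.E → ∃ w, N.Path (φ p) w (φ q)) : N.Connected := by
  have hpath : ∀ p w q, M.Path p w q → ∃ w, N.Path (φ p) w (φ q) := by
    intro p w q h
    induction h with
    | nil q => exact ⟨[], path_nil_iff.2 rfl⟩
    | cons he _ ih =>
      obtain ⟨v, hv⟩ := hE _ _ _ he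
      obtain ⟨v', hv'⟩ := ih
      exact ⟨v ++ v', hv.append hv'⟩
  intro y
  obtain ⟨x, rfl⟩ := hφ y
  obtain ⟨u, hu⟩ := hc x
  exact h0 ▸ hpath _ u _ hu

theorem IsHom.le_langSubgroup {φ : M.Q → N.Q} (hφ : M.IsHom N φ) (h : M.Recognizes L)
    (hN : N.Dual) : L ≤ N.langSubgroup hN := by
  intro g hg
  obtain ⟨u, hu, rfl⟩ := h.exists_path hg
  exact ⟨u, by have := hφ.path hu; rwa [hφ.1] at this, rfl⟩

theorem dual_of_forall (h : ∀ p a q, (p, a, q) ∈ M.E → (q, a.inv, p) ∈ M.E) : M.Dual :=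
  fun p a q => ⟨h p a q, fun he => by simpa only [Ltr.inv_inv] using h _ _ _ he⟩

theorem Recognizes.identification (h : M.Recognizes L) (hN : M.IsIdentification p q N)
    (hu : M.Path M.q0 u p) (hv : M.Path M.q0 v q) :
    N.Recognizes (L ⊔ zpowers (FreeGroup.mk u * (FreeGroup.mk v)⁻¹)) := by
  obtain ⟨φ, hsurj, h0, hφ, hE⟩ := hN
  set L' := L ⊔ zpowers (FreeGroup.mk u * (FreeGroup.mk v)⁻¹)
  have huv : FreeGroup.mk u * (FreeGroup.mk v)⁻¹ ∈ L' :=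
    Subgroup.mem_sup_right (Subgroup.mem_zpowers _)
  have hhom : M.IsHom N φ := ⟨h0, fun _ _ _ he => (hE _).2 ⟨_, he, rfl⟩⟩
  have hlift : ∀ {x b y}, (x, b, y) ∈ N.E →
      ∃ x' y', (x', b, y') ∈ M.E ∧ φ x' = x ∧ φ y' = y := by
    intro x b y he
    obtain ⟨⟨x', b, y'⟩, he', heq⟩ := (hE _).1 he
    cases heq
    exact ⟨x', y', he', rfl, rfl⟩
  have hdual : N.Dual := dual_of_forall fun x b y he => by
    obtain ⟨x', y', he', rfl, rfl⟩ := hlift he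
    exact hhom.2 _ _ _ ((h.dual _ _ _).1 he')
  obtain ⟨T, hT⟩ := h.exists_isCosetLabelling (le_sup_left : L ≤ L')
  have hpq : T p = T q := by
    rwa [hT.eq_inv_of_path hu, hT.eq_inv_of_path hv, QuotientGroup.eq, inv_inv]
  have hfac : FactorsThrough T φ := by
    intro x y hxy
    rcases (hφ x y).1 hxy with rfl | ⟨rfl, rfl⟩ | ⟨rfl, rfl⟩
    exacts [rfl, hpq, hpq.symm]
  have hT' : N.IsCosetLabelling L' (extend φ T fun _ => T p) := by
    refine ⟨h0 ▸ (hfac.extend_apply _ _).trans hT.initial, fun x b y he => ?_⟩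
    obtain ⟨x', y', he', rfl, rfl⟩ := hlift he
    simp only [hfac.extend_apply, hT.edge _ _ _ he']
  refine hT'.recognizes hdual (h.connected.of_surjective hsurj h0 fun x b y he =>
    ⟨[b], path_singleton_iff.2 (hhom.2 _ _ _ he)⟩) (sup_le (hhom.le_langSubgroup h hdual) ?_)
  have hφpq : φ p = φ q := (hφ p q).2 (.inr (.inl ⟨rfl, rfl⟩))
  have hloop := (hφpq ▸ hhom.path hu).append ((hhom.path hv).inv hdual)
  exact Subgroup.zpowers_le.2
    ⟨u ++ wordInv v, by rwa [h0] at hloop, by rw [mk_append, mk_wordInv]⟩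

theorem Recognizes.red1 (h : M.Recognizes L) (hN : Red1 M N) : N.Recognizes L := by
  obtain ⟨p, q, r, a, -, hp, hq, hN⟩ := hN
  obtain ⟨u, hu⟩ := h.connected r
  have := h.identification hN (hu.append (path_singleton_iff.2 hp))
    (hu.append (path_singleton_iff.2 hq))
  rwa [mul_inv_cancel, Subgroup.zpowers_one_eq_bot, sup_bot_eq] at this

theorem Recognizes.isomorphic (h : M.Recognizes L) (hN : M.Isomorphic N) : N.Recognizes L := by
  obtain ⟨φ, hφ, hψ⟩ := hN
  have hdual : N.Dual := fun x b y =>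
    ⟨fun he => by simpa using hφ.2 _ _ _ ((h.dual _ _ _).1 (hψ.2 _ _ _ he)),
      fun he => by simpa using hφ.2 _ _ _ ((h.dual _ _ _).2 (hψ.2 _ _ _ he))⟩
  refine ⟨hdual, h.connected.of_surjective φ.surjective hφ.1 fun x b y he =>
    ⟨[b], path_singleton_iff.2 (hφ.2 _ _ _ he)⟩, Set.Subset.antisymm ?_
      (hφ.le_langSubgroup h hdual)⟩
  rintro _ ⟨u, hu, rfl⟩
  exact h.mk_mem (by simpa only [hψ.1] using hψ.path hu)

theorem Path.exists_edge_ne (h : M.Path p u q) (hpq : p ≠ q) :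
    ∃ r b, r ≠ q ∧ (r, b, q) ∈ M.E := by
  induction h with
  | nil => exact absurd rfl hpq
  | @cons p r q b _ he _ ih =>
    by_cases hr : r = q
    · exact ⟨p, b, hpq, hr ▸ he⟩
    · exact ih hr

/-- `φ` embeds `N` into `M`, and the only other state of `M` is a leaf `q`, attached to `φ p` by
transitions labelled `a` and `a⁻¹`. -/
structure IsLeafDeletion (M N : Autom A) (φ : N.Q → M.Q) (p : N.Q) (a : Ltr A) (q : M.Q) :
    Prop where
  injective : Injective φ
  isHom : N.IsHom M φ
  apply_ne : ∀ x, φ x ≠ q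
  exists_eq : ∀ x ≠ q, ∃ y, φ y = x
  edge_cases : ∀ x b y, (x, b, y) ∈ M.E →
    (∃ x' y', φ x' = x ∧ φ y' = y ∧ (x', b, y') ∈ N.E) ∨
      (x, b, y) = (φ p, a, q) ∨ (x, b, y) = (q, a.inv, φ p)
  dual : M.Dual → N.Dual

theorem Red2.exists_isLeafDeletion (hN : Red2 M N) (hc : M.Connected) :
    ∃ φ p a q, IsLeafDeletion M N φ p a q := by
  obtain ⟨p, q, a, hq0, -, -, hE, φ, hinj, hrange, h0, hφE⟩ := hN
  have hex : ∀ x ≠ q, ∃ y, φ y = x := fun _ hx => hrange.superset hx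
  obtain ⟨u, hu⟩ := hc q
  obtain ⟨r, b, hrq, hr⟩ := hu.exists_edge_ne hq0.symm
  have hpq : p ≠ q := by
    rcases hE _ hr (.inr rfl) with heq | heq <;> cases heq
    exacts [hrq, absurd rfl hrq]
  obtain ⟨p, rfl⟩ := hex p hpq
  refine ⟨φ, p, a, q, hinj, ⟨h0, fun _ _ _ he => (hφE _).1 he⟩,
    fun x => hrange.subset ⟨x, rfl⟩, hex, fun x b y he => ?_,
    fun hM => dual_of_forall fun x b y he =>
      (hφE _).2 ((hM _ _ _).1 ((hφE (x, b, y)).1 he))⟩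
  by_cases hxy : x = q ∨ y = q
  · exact .inr (hE _ he hxy)
  · obtain ⟨hx, hy⟩ := not_or.1 hxy
    obtain ⟨⟨x, rfl⟩, ⟨y, rfl⟩⟩ := And.intro (hex x hx) (hex y hy)
    exact .inl ⟨x, y, rfl, rfl, (hφE (x, b, y)).2 he⟩

namespace IsLeafDeletion

variable {φ : N.Q → M.Q} {p : N.Q}

theorem extend_leaf {α : Type*} (h : IsLeafDeletion M N φ p a q) (f : N.Q → α) (c : α) :
    extend φ f (fun _ => c) q = c :=
  extend_apply' _ _ _ fun ⟨x, hx⟩ => h.apply_ne x hx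

theorem connected (h : IsLeafDeletion M N φ p a q) (hc : M.Connected) : N.Connected := by
  have hr : ∀ x, extend φ id (fun _ => p) (φ x) = x := fun x => h.injective.extend_apply _ _ x
  have hq : extend φ id (fun _ => p) q = p := h.extend_leaf id p
  refine hc.of_surjective (φ := extend φ id fun _ => p) (fun x => ⟨φ x, hr x⟩)
    (h.isHom.1 ▸ hr _) fun x b y he => ?_
  rcases h.edge_cases x b y he with ⟨x, y, rfl, rfl, he⟩ | heq | heq
  · exact ⟨[b], by rwa [hr, hr, path_singleton_iff]⟩
  all_goals cases heq; exact ⟨[], by rw [hr, hq, path_nil_iff]⟩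

theorem exists_isCosetLabelling (h : IsLeafDeletion M N φ p a q) {T : N.Q → FreeGroup A ⧸ L}
    (hT : N.IsCosetLabelling L T) : ∃ T, M.IsCosetLabelling L T := by
  let T' : M.Q → FreeGroup A ⧸ L := extend φ T fun _ => FreeGroup.mk [a.inv] • T p
  have hφ : ∀ x, T' (φ x) = T x := fun x => h.injective.extend_apply _ _ x
  have hq : T' q = FreeGroup.mk [a.inv] • T p := h.extend_leaf T _
  refine ⟨T', h.isHom.1 ▸ (hφ _).trans hT.initial, fun x b y he => ?_⟩
  rcases h.edge_cases x b y he with ⟨x, y, rfl, rfl, he'⟩ | heq | heq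
  · rw [hφ, hφ, hT.edge _ _ _ he']
  · cases heq
    rw [hφ, hq, mk_singleton_inv, smul_inv_smul]
  · cases heq
    rw [hφ, hq]

theorem recognizes (h : IsLeafDeletion M N φ p a q) (hM : M.Recognizes L) : N.Recognizes L := by
  have hdual := h.dual hM.dual
  have hN : N.Recognizes (N.langSubgroup hdual) := ⟨hdual, h.connected hM.connected, rfl⟩
  obtain ⟨T, hT⟩ := hN.exists_isCosetLabelling le_rfl
  obtain ⟨T', hT'⟩ := h.exists_isCosetLabelling hT
  refine ⟨hdual, hN.connected, Set.Subset.antisymm ?_ (hM.langRho_eq ▸ hT'.langRho_subset)⟩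
  exact hM.langRho_eq ▸ h.isHom.le_langSubgroup hN hM.dual

end IsLeafDeletion

theorem Recognizes.red2 (h : M.Recognizes L) (hN : Red2 M N) : N.Recognizes L :=
  let ⟨_, _, _, _, hdel⟩ := hN.exists_isLeafDeletion h.connected
  hdel.recognizes h

theorem Red2.deterministic (hN : Red2 M N) (hM : M.Deterministic) : N.Deterministic := by
  obtain ⟨-, -, -, -, -, -, -, φ, hinj, -, -, hE⟩ := hN
  exact fun p a q q' h h' => hinj (hM _ _ _ _ ((hE (p, a, q)).1 h) ((hE (p, a, q')).1 h'))

theorem Recognizes.reductionOf (h : M.Recognizes L) (hN : ReductionOf M N) : N.Recognizes L := by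
  obtain ⟨M₁, h₁, -, h₂, -⟩ := hN
  have hM₁ : M₁.Recognizes L := by
    clear h₂
    induction h₁ with
    | refl => exact h
    | tail _ hstep ih => exact ih.red1 hstep
  induction h₂ with
  | refl => exact hM₁
  | tail _ hstep ih => exact ih.red2 hstep

namespace IsExpansion

theorem exists_hom (hN : M.IsExpansion p w q N) : ∃ φ : M.Q → N.Q, M.IsHom N φ ∧
    N.Path (φ p) w (φ q) ∧ ∀ x, (∃ y, φ y = x) ∨ ∃ u, N.Path (φ p) u x := by
  obtain ⟨-, φ, c, -, h0, hc0, hcn, -, -, hsurj, hE⟩ := hN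
  have hpath : ∀ i : Fin (w.length + 1), N.Path (φ p) (w.take i) (c i) := by
    intro i
    induction i using Fin.induction with
    | zero => exact path_nil_iff.2 hc0.symm
    | succ i ih =>
      rw [Fin.val_succ, List.take_succ_eq_append_getElem i.2]
      exact ih.append (path_singleton_iff.2 ((hE _).2 (.inr ⟨i, .inl rfl⟩)))
  refine ⟨φ, ⟨h0, fun _ _ _ he => (hE _).2 (.inl ⟨_, he, rfl⟩)⟩, ?_, fun x => ?_⟩
  · simpa [hcn] using hpath (Fin.last _)
  · exact (hsurj x).imp_right fun ⟨i, hi⟩ => ⟨_, hi ▸ hpath i⟩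

theorem dual (hN : M.IsExpansion p w q N) (hM : M.Dual) : N.Dual := by
  obtain ⟨-, φ, c, -, -, -, -, -, -, -, hE⟩ := hN
  refine dual_of_forall fun x b y he => (hE _).2 ?_
  rcases (hE _).1 he with ⟨⟨x', b', y'⟩, he', heq⟩ | ⟨i, heq | heq⟩ <;> cases heq
  · exact .inl ⟨(y', b'.inv, x'), (hM _ _ _).1 he', rfl⟩
  · exact .inr ⟨i, .inr rfl⟩
  · exact .inr ⟨i, .inl (by rw [Ltr.inv_inv])⟩

theorem exists_extend (hN : M.IsExpansion p w q N) {α : Type*} (t : M.Q → α)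
    (s : Fin (w.length + 1) → α) (hs0 : s 0 = t p) (hsn : s (Fin.last _) = t q) :
    ∃ T : N.Q → α, T N.q0 = t M.q0 ∧ ∀ x b y, (x, b, y) ∈ N.E →
      (∃ x' y', (x', b, y') ∈ M.E ∧ T x = t x' ∧ T y = t y') ∨
      ∃ i : Fin w.length, (b = w.get i ∧ T x = s i.castSucc ∧ T y = s i.succ) ∨
        (b = (w.get i).inv ∧ T x = s i.succ ∧ T y = s i.castSucc) := by
  obtain ⟨-, φ, c, hinj, h0, hc0, hcn, hcφ, hcinj, -, hE⟩ := hN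
  have hends : ∀ i : Fin (w.length + 1), (0 < (i : ℕ) ∧ (i : ℕ) < w.length) ∨
      i = 0 ∨ i = Fin.last _ := by
    intro i
    simp only [Fin.ext_iff, Fin.val_zero, Fin.val_last]
    omega
  have hφc : ∀ x i, φ x = c i → t x = s i := by
    intro x i hx
    rcases hends i with ⟨hi, hi'⟩ | rfl | rfl
    · exact absurd ⟨x, hx⟩ (hcφ i hi hi')
    · rw [hinj (hx.trans hc0), hs0]
    · rw [hinj (hx.trans hcn), hsn]
  have hcc : ∀ i j, c i = c j → s i = s j := by
    intro i j hij
    rcases hends i with ⟨hi, hi'⟩ | rfl | rfl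
    · rw [hcinj i j hi hi' hij]
    · rw [hs0, hφc p j (hc0 ▸ hij)]
    · rw [hsn, hφc q j (hcn ▸ hij)]
  have hfac : FactorsThrough (Sum.elim t s) (Sum.elim φ c) := by
    rintro (x | i) (y | j) h
    exacts [congrArg t (hinj h), hφc x j h, (hφc y i h.symm).symm, hcc i j h]
  let T : N.Q → α := extend (Sum.elim φ c) (Sum.elim t s) fun _ => t p
  have hTφ : ∀ x, T (φ x) = t x := fun x => hfac.extend_apply _ (.inl x)
  have hTc : ∀ i, T (c i) = s i := fun i => hfac.extend_apply _ (.inr i)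
  refine ⟨T, h0 ▸ hTφ _, fun x b y he => ?_⟩
  rcases (hE _).1 he with ⟨⟨x', b', y'⟩, he', heq⟩ | ⟨i, heq | heq⟩ <;> cases heq
  · exact .inl ⟨x', y', he', hTφ x', hTφ y'⟩
  · exact .inr ⟨i, .inl ⟨rfl, hTc _, hTc _⟩⟩
  · exact .inr ⟨i, .inr ⟨rfl, hTc _, hTc _⟩⟩

theorem exists_isCosetLabelling (hN : M.IsExpansion p w q N) {T : M.Q → FreeGroup A ⧸ L}
    (hT : M.IsCosetLabelling L T) (hpq : FreeGroup.mk w • T q = T p) :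
    ∃ T, N.IsCosetLabelling L T := by
  let S : Fin (w.length + 1) → FreeGroup A ⧸ L := fun i => (FreeGroup.mk (w.take i))⁻¹ • T p
  have hstep : ∀ i : Fin w.length, FreeGroup.mk [w.get i] • S i.succ = S i.castSucc := by
    intro i
    simp only [S, Fin.val_succ, List.take_succ_eq_append_getElem i.2, mk_append, mul_inv_rev,
      mul_smul, List.get_eq_getElem, smul_inv_smul, Fin.val_castSucc]
  obtain ⟨T', h0, hE⟩ := hN.exists_extend T S (by simp [S, mk_nil])
    (by simp only [S, Fin.val_last, List.take_length, ← hpq, inv_smul_smul])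
  refine ⟨T', h0.trans hT.initial, fun x b y he => ?_⟩
  rcases hE x b y he with ⟨x', y', he', hx, hy⟩ | ⟨i, ⟨rfl, hx, hy⟩ | ⟨rfl, hx, hy⟩⟩
  · rw [hx, hy, hT.edge _ _ _ he']
  · rw [hx, hy, hstep]
  · rw [hx, hy, mk_singleton_inv, ← hstep, inv_smul_smul]

end IsExpansion

theorem Recognizes.expansion (h : M.Recognizes L) (hN : M.IsExpansion p w q N)
    (hu : M.Path M.q0 u p) (hv : M.Path M.q0 v q) :
    N.Recognizes (L ⊔ zpowers (FreeGroup.mk u * FreeGroup.mk w * (FreeGroup.mk v)⁻¹)) := by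
  have hdual := hN.dual h.dual
  obtain ⟨φ, hφ, hpath, hreach⟩ := hN.exists_hom
  have hu' := hφ.path hu
  have hv' := hφ.path hv
  rw [hφ.1] at hu' hv'
  have hconn : N.Connected := by
    intro x
    rcases hreach x with ⟨y, rfl⟩ | ⟨t, ht⟩
    · obtain ⟨t, ht⟩ := h.connected y
      exact ⟨t, hφ.1 ▸ hφ.path ht⟩
    · exact ⟨_, hu'.append ht⟩
  set g := FreeGroup.mk u * FreeGroup.mk w * (FreeGroup.mk v)⁻¹
  obtain ⟨T, hT⟩ := h.exists_isCosetLabelling (le_sup_left : L ≤ L ⊔ zpowers g)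
  have hpq : FreeGroup.mk w • T q = T p := by
    rw [hT.eq_inv_of_path hu, hT.eq_inv_of_path hv, MulAction.Quotient.smul_coe, smul_eq_mul,
      eq_comm, QuotientGroup.eq, inv_inv, ← mul_assoc]
    exact Subgroup.mem_sup_right (Subgroup.mem_zpowers g)
  obtain ⟨T', hT'⟩ := hN.exists_isCosetLabelling hT hpq
  refine hT'.recognizes hdual hconn (sup_le (hφ.le_langSubgroup h hdual) ?_)
  exact Subgroup.zpowers_le.2 ⟨u ++ w ++ wordInv v, (hu'.append hpath).append (hv'.inv hdual),
    by rw [mk_append, mk_append, mk_wordInv]⟩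

end Recognizes

section CoreOfAutomaton

variable {A : Type} {M : Autom A} {L : Subgroup (FreeGroup A)} {p q : M.Q} {u v : List (Ltr A)}

theorem Recognizes.exists_path_of_mem_convexCore (h : M.Recognizes L) {g : FreeGroup A}
    (hg : g ∈ convexCore L) : ∃ u q, M.Path M.q0 u q ∧ FreeGroup.mk u = g := by
  obtain ⟨s, t, hred, hst, hgs⟩ := hg
  obtain ⟨w, hw, hwst⟩ := h.exists_path hst
  obtain ⟨z, z', rfl, hz⟩ := hred.exists_append_of_mk_eq hwst
  obtain ⟨r, hr, hrg⟩ := h.exists_path hgs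
  obtain ⟨q, hzq, -⟩ := path_append_iff.1 hw
  exact ⟨r ++ z, q, hr.append hzq, by rw [mk_append, hrg, hz, inv_mul_cancel_right]⟩

theorem Recognizes.exists_path_of_isReducedWord (h : M.Recognizes L) (hdet : M.Deterministic)
    (hu : IsReducedWord u) (hcore : FreeGroup.mk u ∈ convexCore L) : ∃ q, M.Path M.q0 u q := by
  obtain ⟨v, q, hv, hvu⟩ := h.exists_path_of_mem_convexCore hcore
  exact ⟨q, hv.of_red h.dual hdet (hu.red_of_mk_eq hvu)⟩

theorem Deterministic.eq_of_mul_inv_mem_langRho (hdet : M.Deterministic) (hM : M.Dual)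
    (hu : M.Path M.q0 u p) (hv : M.Path M.q0 v q)
    (huv : FreeGroup.mk u * (FreeGroup.mk v)⁻¹ ∈ M.langRho) : p = q := by
  obtain ⟨z, hz, hzuv⟩ := huv
  obtain ⟨w, hw, hwu⟩ := exists_isReducedWord_mk (FreeGroup.mk u)
  have hzv : FreeGroup.mk (z ++ v) = FreeGroup.mk w := by
    rw [mk_append, hzuv, inv_mul_cancel_right, hwu]
  exact (hu.of_red hM hdet (hw.red_of_mk_eq hwu.symm)).unique hdet
    ((Path.append hz hv).of_red hM hdet (hw.red_of_mk_eq hzv))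

theorem Recognizes.eq_of_mul_inv_mem (h : M.Recognizes L) (hdet : M.Deterministic)
    (hu : M.Path M.q0 u p) (hv : M.Path M.q0 v q)
    (huv : FreeGroup.mk u * (FreeGroup.mk v)⁻¹ ∈ L) : p = q :=
  hdet.eq_of_mul_inv_mem_langRho h.dual hu hv (h.langRho_eq ▸ huv)

theorem Recognizes.mk_mem_convexCore_of_path (h : M.Recognizes L) (hu : M.Path M.q0 u q)
    (hv : M.Path M.q0 v q) (hcore : FreeGroup.mk u ∈ convexCore L) :
    FreeGroup.mk v ∈ convexCore L := by
  simpa only [inv_mul_cancel_right] using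
    mul_mem_convexCore (h.mk_mul_mk_inv_mem hv hu) hcore

theorem Represents.mk_mem_convexCore (h : M.Represents L) (hu : M.Path M.q0 u q) :
    FreeGroup.mk u ∈ convexCore L := by
  obtain ⟨s, t, hst, hs, ht⟩ := h.2.1 q
  exact h.recognizes.mk_mem_convexCore_of_path hs hu
    (_root_.mk_mem_convexCore hst (h.recognizes.mk_mem (hs.append ht)))

theorem Recognizes.isRed_of_forall_mem_convexCore (h : M.Recognizes L) (hdet : M.Deterministic)
    (hcore : ∀ q u, M.Path M.q0 u q → FreeGroup.mk u ∈ convexCore L) : M.IsRed := by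
  intro q
  obtain ⟨u, hu⟩ := h.connected q
  obtain ⟨s, t, hred, hst, hus⟩ := hcore q u hu
  obtain ⟨w, hw, hwst⟩ := h.exists_path hst
  obtain ⟨r, hs, ht⟩ := path_append_iff.1 (hw.of_red h.dual hdet (hred.red_of_mk_eq hwst))
  obtain rfl := h.eq_of_mul_inv_mem hdet hu hs hus
  exact ⟨s, t, hred, hs, ht⟩

theorem Recognizes.exists_geodesic (h : M.Recognizes L) (hdet : M.Deterministic) (q : M.Q) :
    ∃ u, IsReducedWord u ∧ M.Path M.q0 u q ∧ ∀ v, M.Path M.q0 v q → u.length ≤ v.length := by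
  obtain ⟨u, hu, hmin⟩ := exists_minimalFor_of_wellFoundedLT
    (fun u => M.Path M.q0 u q) List.length (h.connected q)
  have hle : ∀ v, M.Path M.q0 v q → u.length ≤ v.length :=
    fun v hv => (le_total _ _).elim id (hmin hv)
  obtain ⟨w, hw, hwu⟩ := exists_isReducedWord_mk (FreeGroup.mk u)
  exact ⟨w, hw, hu.of_red h.dual hdet (hw.red_of_mk_eq hwu.symm),
    fun v hv => (hw.length_le_of_mk_eq hwu.symm).trans (hle v hv)⟩

/- If no reduced loop passes through `mk u` followed by `b`, then the geodesic to the target of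
`b` cannot avoid `b`, for otherwise it would close up such a loop. -/
theorem Recognizes.length_lt_of_notMem_convexCore (h : M.Recognizes L) (hdet : M.Deterministic)
    {b : Ltr A} (hub : IsReducedWord (u ++ [b])) (hcore : FreeGroup.mk (u ++ [b]) ∉ convexCore L)
    (hu : M.Path M.q0 u q) (hmin : ∀ v, M.Path M.q0 v q → u.length ≤ v.length)
    (hb : (q, b, p) ∈ M.E) (hv : M.Path M.q0 v p) (hv_red : IsReducedWord v) :
    u.length < v.length := by
  rcases hub.append_or hv_red.wordInv with hred | ⟨u', c, v', hc, hvc⟩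
  · refine absurd (_root_.mk_mem_convexCore hred ?_) hcore
    exact h.mk_mem ((hu.append (path_singleton_iff.2 hb)).append (hv.inv h.dual))
  · obtain ⟨-, hbc⟩ := List.append_inj' hc rfl
    obtain rfl : b = c := List.singleton_inj.1 hbc
    have hvb : v = wordInv v' ++ [b] := by
      rw [← wordInv_wordInv v, hvc, ← List.singleton_append, wordInv_append]
      simp [wordInv, Ltr.inv_inv]
    rw [hvb] at hv ⊢
    obtain ⟨q', hq', hb'⟩ := path_append_iff.1 hv
    obtain rfl : q' = q := hdet _ _ _ _ ((h.dual _ _ _).1 (path_singleton_iff.1 hb'))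
      ((h.dual _ _ _).1 hb)
    simpa [Nat.lt_succ_iff] using hmin _ hq'

/- A state outside the core at maximal distance from the initial state is a leaf. -/
theorem Recognizes.exists_leaf (h : M.Recognizes L) (hdet : M.Deterministic) [Finite M.Q]
    (hred : ¬ M.IsRed) :
    ∃ p a q, q ≠ M.q0 ∧ (p, a, q) ∈ M.E ∧ ∀ b r, (q, b, r) ∈ M.E → b = a.inv := by
  choose u hu hpath hmin using h.exists_geodesic hdet
  let S : Set M.Q := {q | FreeGroup.mk (u q) ∉ convexCore L}
  have hS : S.Nonempty := by
    by_contra hS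
    refine hred (h.isRed_of_forall_mem_convexCore hdet fun q v hv =>
      h.mk_mem_convexCore_of_path (hpath q) hv ?_)
    by_contra hq
    exact hS ⟨q, hq⟩
  obtain ⟨q, hq, hmax⟩ := Set.exists_max_image S (fun q => (u q).length) S.toFinite hS
  have hnil : u q ≠ [] := fun hnil => hq (hnil ▸ mem_convexCore_of_mem (one_mem L))
  obtain ⟨s, a, hsa⟩ := (List.eq_nil_or_concat' (u q)).resolve_left hnil
  obtain ⟨p, -, hpq⟩ := path_append_iff.1 (hsa ▸ hpath q)
  refine ⟨p, a, q, ?_, path_singleton_iff.1 hpq, fun b r hqr => ?_⟩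
  · rintro rfl
    exact hnil (List.length_eq_zero_iff.1 (Nat.le_zero.1 (hmin M.q0 [] (path_nil_iff.2 rfl))))
  by_contra hb
  have hub : IsReducedWord (u q ++ [b]) := by
    refine IsReducedWord.append_iff.2 ⟨hu q, .singleton b, ?_⟩
    simpa [hsa] using hb
  have hcore : FreeGroup.mk (u q ++ [b]) ∉ convexCore L :=
    fun hmem => hq (mem_convexCore_of_prefix hub hmem)
  have hr : r ∈ S := fun hmem => hcore (h.mk_mem_convexCore_of_path (hpath r)
    ((hpath q).append (path_singleton_iff.2 hqr)) hmem)
  exact (hmax r hr).not_gt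
    (h.length_lt_of_notMem_convexCore hdet hub hcore (hpath q) (hmin q) hqr (hpath r) (hu r))

end CoreOfAutomaton

section Existence

variable {A : Type} {M N : Autom A} {L : Subgroup (FreeGroup A)} {p q : M.Q} {w : List (Ltr A)}

theorem exists_isIdentification (M : Autom A) (p q : M.Q) : ∃ N, M.IsIdentification p q N := by
  classical
  let φ : M.Q → Set.range (update id q p) := Set.rangeFactorization (update id q p)
  refine ⟨⟨_, φ M.q0, {e | ∃ e' ∈ M.E, e = (φ e'.1, e'.2.1, φ e'.2.2)}⟩, φ,
    Set.rangeFactorization_surjective, rfl, fun x y => ?_, fun _ => Iff.rfl⟩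
  rw [Subtype.ext_iff]
  change update id q p x = update id q p y ↔ _
  simp only [update_apply, id]
  grind

theorem exists_isDeletion (hq : q ≠ M.q0) : ∃ N, M.IsDeletion q N :=
  ⟨⟨{x // x ≠ q}, ⟨M.q0, hq.symm⟩, {e | (e.1.1, e.2.1, e.2.2.1) ∈ M.E}⟩, Subtype.val,
    Subtype.val_injective, Subtype.range_val, rfl, fun _ => Iff.rfl⟩

theorem exists_isExpansion (M : Autom A) [Finite M.Q] (p q : M.Q) (hw : w ≠ []) :
    ∃ N, Finite N.Q ∧ M.IsExpansion p w q N := by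
  classical
  let I : Type := {i : Fin (w.length + 1) // 0 < (i : ℕ) ∧ (i : ℕ) < w.length}
  let φ : M.Q → M.Q ⊕ I := Sum.inl
  let c : Fin (w.length + 1) → M.Q ⊕ I := fun i =>
    if hi : 0 < (i : ℕ) ∧ (i : ℕ) < w.length then .inr ⟨i, hi⟩ else .inl (if i = 0 then p else q)
  have hc : ∀ i : I, c i = .inr i := fun i => dif_pos i.2
  have hlast : Fin.last w.length ≠ 0 := by simpa [Fin.ext_iff] using hw
  refine ⟨⟨M.Q ⊕ I, φ M.q0, {e | (∃ e' ∈ M.E, e = (φ e'.1, e'.2.1, φ e'.2.2)) ∨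
      ∃ i : Fin w.length, e = (c i.castSucc, w.get i, c i.succ) ∨
        e = (c i.succ, (w.get i).inv, c i.castSucc)}⟩, inferInstanceAs (Finite (M.Q ⊕ I)), hw, φ, c,
    Sum.inl_injective, rfl, by simp [c, φ], by simp [c, φ, hlast], ?_, ?_, ?_, fun _ => Iff.rfl⟩
  · rintro i hi hi' ⟨x, hx⟩
    exact Sum.inl_ne_inr (hx.trans (hc ⟨i, hi, hi'⟩))
  · intro i j hi hi' hij
    rw [hc ⟨i, hi, hi'⟩] at hij
    by_cases hj : 0 < (j : ℕ) ∧ (j : ℕ) < w.length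
    · rw [hc ⟨j, hj⟩] at hij
      exact congrArg Subtype.val (Sum.inr.inj hij)
    · rw [show c j = .inl _ from dif_neg hj] at hij
      exact absurd hij Sum.inr_ne_inl
  · rintro (x | i)
    · exact .inl ⟨x, rfl⟩
    · exact .inr ⟨i, hc i⟩

theorem Red1.finite_and_card_lt [Finite M.Q] (h : Red1 M N) :
    Finite N.Q ∧ Nat.card N.Q < Nat.card M.Q := by
  obtain ⟨p, q, -, -, hpq, -, -, φ, hsurj, -, hφ, -⟩ := h
  refine ⟨.of_surjective φ hsurj, lt_of_not_ge fun hle => hpq ?_⟩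
  exact (hsurj.bijective_of_nat_card_le hle).injective ((hφ p q).2 (.inr (.inl ⟨rfl, rfl⟩)))

theorem Red2.finite_and_card_lt [Finite M.Q] (h : Red2 M N) :
    Finite N.Q ∧ Nat.card N.Q < Nat.card M.Q := by
  obtain ⟨-, q, -, -, -, -, -, φ, hinj, hrange, -⟩ := h
  refine ⟨.of_injective φ hinj, lt_of_not_ge fun hle => ?_⟩
  have hq : q ∈ Set.range φ := (hinj.bijective_of_nat_card_le hle).surjective q
  exact hrange.subset hq rfl

theorem exists_normalForm {R : Autom A → Autom A → Prop}
    (hR : ∀ M N, Finite M.Q → R M N → Finite N.Q ∧ Nat.card N.Q < Nat.card M.Q)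
    (M : Autom A) [Finite M.Q] :
    ∃ N, Finite N.Q ∧ Relation.ReflTransGen R M N ∧ ∀ N', ¬ R N N' := by
  by_cases hM : ∃ N, R M N
  · obtain ⟨N, hN⟩ := hM
    obtain ⟨_, _⟩ := hR M N ‹_› hN
    obtain ⟨N', hfin, hN', hmax⟩ := exists_normalForm hR N
    exact ⟨N', hfin, .head hN hN', hmax⟩
  · exact ⟨M, ‹_›, .refl, not_exists.1 hM⟩
termination_by Nat.card M.Q
decreasing_by assumption

theorem deterministic_of_forall_not_red1 (h : ∀ N, ¬ Red1 M N) : M.Deterministic := by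
  intro p a q q' hq hq'
  by_contra hne
  obtain ⟨N, hN⟩ := M.exists_isIdentification q q'
  exact h N ⟨q, q', p, a, hne, hq, hq', hN⟩

theorem Recognizes.isRed_of_forall_not_red2 [Finite M.Q] (h : M.Recognizes L)
    (hdet : M.Deterministic) (hM : ∀ N, ¬ Red2 M N) : M.IsRed := by
  by_contra hred
  obtain ⟨p, a, q, hq, hpq, hleaf⟩ := h.exists_leaf hdet hred
  obtain ⟨N, hN⟩ := exists_isDeletion hq
  have hqp : (q, a.inv, p) ∈ M.E := (h.dual _ _ _).1 hpq
  have hout : ∀ b r, (q, b, r) ∈ M.E → b = a.inv ∧ r = p := by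
    intro b r hb
    obtain rfl := hleaf b r hb
    exact ⟨rfl, hdet _ _ _ _ hb hqp⟩
  refine hM N ⟨p, q, a, hq, hpq, hqp, ?_, hN⟩
  rintro ⟨x, b, y⟩ he (rfl | rfl)
  · obtain ⟨rfl, rfl⟩ := hout b y he
    exact .inr rfl
  · obtain ⟨hb, rfl⟩ := hout b.inv x ((h.dual _ _ _).1 he)
    rw [← Ltr.inv_inv b, hb, Ltr.inv_inv]
    exact .inl rfl

theorem ReductionOf.deterministic (h : ReductionOf M N) : N.Deterministic := by
  obtain ⟨M₁, -, hdet, h₂, -⟩ := h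
  induction h₂ with
  | refl => exact hdet
  | tail _ hstep ih => exact hstep.deterministic ih

theorem Recognizes.exists_reductionOf [Finite M.Q] (h : M.Recognizes L) :
    ∃ N, Finite N.Q ∧ ReductionOf M N ∧ N.Represents L := by
  obtain ⟨M₁, _, h₁, hmax₁⟩ := M.exists_normalForm (R := Red1) fun _ _ _ => Red1.finite_and_card_lt
  obtain ⟨N, _, h₂, hmax₂⟩ := M₁.exists_normalForm (R := Red2) fun _ _ _ => Red2.finite_and_card_lt
  have hdet₁ := deterministic_of_forall_not_red1 hmax₁
  have hred : ReductionOf M N := ⟨M₁, h₁, hdet₁, h₂, hmax₂⟩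
  have hdet := hred.deterministic
  have hN := h.reductionOf hred
  exact ⟨N, ‹_›, hred, hN.represents hdet (hN.isRed_of_forall_not_red2 hdet hmax₂)⟩

theorem Isomorphic.refl (M : Autom A) : M.Isomorphic M :=
  ⟨Equiv.refl _, ⟨rfl, fun _ _ _ he => he⟩, ⟨rfl, fun _ _ _ he => he⟩⟩

theorem Recognizes.exists_iStep [Finite M.Q] (h : M.Recognizes L) {u v : List (Ltr A)}
    (hpq : p ≠ q) (hu : M.Path M.q0 u p) (hv : M.Path M.q0 v q) :
    ∃ N, Finite N.Q ∧ M.IStep p q N ∧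
      N.Represents (L ⊔ zpowers (FreeGroup.mk u * (FreeGroup.mk v)⁻¹)) := by
  obtain ⟨N', hN'⟩ := M.exists_isIdentification p q
  have : Finite N'.Q := let ⟨φ, hφ, _⟩ := hN'; .of_surjective φ hφ
  obtain ⟨N, hfin, hred, hN⟩ := (h.identification hN' hu hv).exists_reductionOf
  exact ⟨N, hfin, ⟨hpq, N', N, hN', hred, .refl N⟩, hN⟩

theorem Recognizes.exists_expStep [Finite M.Q] (h : M.Recognizes L) {u v : List (Ltr A)}
    (hw : w ≠ []) (hu : M.Path M.q0 u p) (hv : M.Path M.q0 v q) :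
    ∃ N, Finite N.Q ∧ M.ExpStep p w q N ∧
      N.Represents (L ⊔ zpowers (FreeGroup.mk u * FreeGroup.mk w * (FreeGroup.mk v)⁻¹)) := by
  obtain ⟨N', hfin', hN'⟩ := M.exists_isExpansion p q hw
  obtain ⟨N, hfin, hred, hN⟩ := (h.expansion hN' hu hv).exists_reductionOf
  exact ⟨N, hfin, ⟨N', N, hN', hred, .refl N⟩, hN⟩

theorem Recognizes.exists_of_iStepAny (h : M.Recognizes L) (hN : IStepAny M N) :
    ∃ g, N.Recognizes (L ⊔ zpowers g) := by
  obtain ⟨p, q, -, N', N'', hid, hred, hiso⟩ := hN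
  obtain ⟨⟨u, hu⟩, ⟨v, hv⟩⟩ := And.intro (h.connected p) (h.connected q)
  exact ⟨_, ((h.identification hid hu hv).reductionOf hred).isomorphic hiso⟩

theorem Recognizes.exists_of_reStepAny (h : M.Recognizes L) (hN : REStepAny M N) :
    ∃ g, N.Recognizes (L ⊔ zpowers g) := by
  obtain ⟨p, w, q, -, ⟨N', N'', hexp, hred, hiso⟩, -⟩ := hN
  obtain ⟨⟨u, hu⟩, ⟨v, hv⟩⟩ := And.intro (h.connected p) (h.connected q)
  exact ⟨_, ((h.expansion hexp hu hv).reductionOf hred).isomorphic hiso⟩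

end Existence

section Morphisms

variable {A : Type} {M N B : Autom A} {L L' : Subgroup (FreeGroup A)} {p : M.Q} {a : Ltr A}
  {u : List (Ltr A)}

theorem IsHom.comp {ψ : N.Q → B.Q} {φ : M.Q → N.Q} (hψ : N.IsHom B ψ) (hφ : M.IsHom N φ) :
    M.IsHom B (ψ ∘ φ) :=
  ⟨(congrArg ψ hφ.1).trans hψ.1, fun _ _ _ he => hψ.2 _ _ _ (hφ.2 _ _ _ he)⟩

theorem Recognizes.exists_edge (h : M.Recognizes L) (hdet : M.Deterministic)
    (hu : M.Path M.q0 u p) (hcore : FreeGroup.mk (u ++ [a]) ∈ convexCore L) :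
    ∃ r, (p, a, r) ∈ M.E := by
  obtain ⟨w, hw, hwu⟩ := exists_isReducedWord_mk (FreeGroup.mk u)
  have hpath := hu.of_red h.dual hdet (hw.red_of_mk_eq hwu.symm)
  rcases hw.append_or (.singleton a) with hred | ⟨w', b, v', rfl, hab⟩
  · rw [mk_append, ← hwu, ← mk_append] at hcore
    obtain ⟨r, hr⟩ := h.exists_path_of_isReducedWord hdet hred hcore
    obtain ⟨p', hp', ha⟩ := path_append_iff.1 hr
    exact ⟨r, hp'.unique hdet hpath ▸ path_singleton_iff.1 ha⟩
  · obtain ⟨rfl, -⟩ := List.cons.inj hab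
    obtain ⟨r, -, hb⟩ := path_append_iff.1 hpath
    exact ⟨r, (h.dual _ _ _).1 (path_singleton_iff.1 hb)⟩

theorem Represents.exists_isHom (hM : M.Represents L) (hN : N.Recognizes L')
    (hdet : N.Deterministic) (hL : L ≤ L') : ∃ φ, M.IsHom N φ := by
  choose u hu using hM.recognizes.connected
  choose v φ hv hvu using fun q =>
    hN.exists_path_of_mem_convexCore (convexCore_mono hL (hM.mk_mem_convexCore (hu q)))
  refine ⟨φ, hN.eq_of_mul_inv_mem hdet (hv _) (path_nil_iff.2 rfl) ?_, fun p a q he => ?_⟩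
  · rw [hvu, mk_nil, inv_one, mul_one]
    exact hL (hM.recognizes.mk_mem (hu _))
  · have hpa := (hu p).append (path_singleton_iff.2 he)
    have heq : FreeGroup.mk (v p ++ [a]) = FreeGroup.mk (u p ++ [a]) := by
      rw [mk_append, hvu, mk_append]
    obtain ⟨r, hr⟩ := hN.exists_edge hdet (hv p)
      (heq ▸ convexCore_mono hL (hM.mk_mem_convexCore hpa))
    have hrq : r = φ q := by
      refine hN.eq_of_mul_inv_mem hdet ((hv p).append (path_singleton_iff.2 hr)) (hv q) ?_
      rw [heq, hvu]
      exact hL (hM.recognizes.mk_mul_mk_inv_mem hpa (hu q))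
    exact hrq ▸ hr

theorem IsHom.injective {φ : M.Q → N.Q} {ψ : M.Q → B.Q} (hφ : M.IsHom N φ)
    (hψ : M.IsHom B ψ) (hψ_inj : Injective ψ) (hM : M.Connected) (hN : N.Recognizes L)
    (hB : B.Dual) (hdet : B.Deterministic) (hL : L ≤ B.langSubgroup hB) : Injective φ := by
  intro x y hxy
  obtain ⟨⟨u, hu⟩, ⟨v, hv⟩⟩ := And.intro (hM x) (hM y)
  have hNu := hφ.path hu
  have hNv := hφ.path hv
  rw [hφ.1] at hNu hNv
  have hBu := hψ.path hu
  have hBv := hψ.path hv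
  rw [hψ.1] at hBu hBv
  exact hψ_inj (hdet.eq_of_mul_inv_mem_langRho hB hBu hBv
    (hL (hN.mk_mul_mk_inv_mem hNu (hxy ▸ hNv))))

end Morphisms

section Extension

variable {A : Type} {M : Autom A} {p q : M.Q} {a : Ltr A}

/-- `M` with the transition `(p, a, q)` and its inverse added. -/
def addEdge (M : Autom A) (p : M.Q) (a : Ltr A) (q : M.Q) : Autom A where
  Q := M.Q
  q0 := M.q0
  E := M.E ∪ {(p, a, q), (q, a.inv, p)}

/-- `M` with an isolated state `none` added. -/
def addPoint (M : Autom A) : Autom A where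
  Q := Option M.Q
  q0 := some M.q0
  E := {e | ∃ p a q, (p, a, q) ∈ M.E ∧ e = (some p, a, some q)}

theorem Dual.addEdge (hM : M.Dual) : (M.addEdge p a q).Dual := by
  refine dual_of_forall fun x b y he => ?_
  rcases he with he | heq | heq
  · exact .inl ((hM _ _ _).1 he)
  · cases heq
    exact .inr (.inr rfl)
  · cases heq
    exact .inr (.inl (congrArg (fun b => (p, b, q)) a.inv_inv))

theorem Deterministic.addEdge (hM : M.Deterministic) (hp : ∀ r, (p, a, r) ∉ M.E)
    (hq : ∀ r, (q, a.inv, r) ∉ M.E) : (M.addEdge p a q).Deterministic := by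
  have hne : a ≠ a.inv := fun h => by simpa [Ltr.inv] using congrArg Prod.snd h
  have hE : ∀ (x : M.Q) b (y : M.Q), (x, b, y) ∈ (M.addEdge p a q).E →
      (x, b, y) ∈ M.E ∨ (x = p ∧ b = a ∧ y = q) ∨ (x = q ∧ b = a.inv ∧ y = p) := by
    intro x b y he
    rcases he with he | heq | heq
    · exact .inl he
    · cases heq
      exact .inr (.inl ⟨rfl, rfl, rfl⟩)
    · cases heq
      exact .inr (.inr ⟨rfl, rfl, rfl⟩)
  intro (x : M.Q) b (y : M.Q) (y' : M.Q) he he'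
  rcases hE _ _ _ he with h | h | h <;> rcases hE _ _ _ he' with h' | h' | h'
  · exact hM _ _ _ _ h h'
  all_goals grind

theorem Dual.addPoint (hM : M.Dual) : M.addPoint.Dual := by
  refine dual_of_forall ?_
  rintro _ _ _ ⟨x, b, y, he, heq⟩
  cases heq
  exact ⟨_, _, _, (hM _ _ _).1 he, rfl⟩

theorem Deterministic.addPoint (hM : M.Deterministic) : M.addPoint.Deterministic := by
  rintro _ _ _ _ ⟨x, b, y, he, heq⟩ ⟨x', b', y', he', heq'⟩
  cases heq
  cases heq'
  rw [hM _ _ _ _ he he']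

/-- `M` with a new state `none` and a new transition `(p, a, none)` added. -/
def addLeaf (M : Autom A) (p : M.Q) (a : Ltr A) : Autom A :=
  M.addPoint.addEdge (some p) a none

theorem Deterministic.addLeaf (hM : M.Deterministic) (hp : ∀ r, (p, a, r) ∉ M.E) :
    (M.addLeaf p a).Deterministic := by
  refine hM.addPoint.addEdge ?_ ?_
  · rintro _ ⟨x, b, y, he, heq⟩
    cases heq
    exact hp _ he
  · rintro _ ⟨x, b, y, _, heq⟩
    cases heq

theorem edge_addLeaf (M : Autom A) (p : M.Q) (a : Ltr A) :
    (some p, a, none) ∈ (M.addLeaf p a).E :=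
  .inr (.inl rfl)

theorem isHom_addLeaf (M : Autom A) (p : M.Q) (a : Ltr A) : M.IsHom (M.addLeaf p a) some :=
  ⟨rfl, fun x b y he => .inl ⟨x, b, y, he, rfl⟩⟩

theorem eq_inv_of_mem_addLeaf {b : Ltr A} {r : (M.addLeaf p a).Q}
    (he : (none, b, r) ∈ (M.addLeaf p a).E) : b = a.inv := by
  rcases he with ⟨x, c, y, -, heq⟩ | heq | heq <;> cases heq
  rfl

theorem mem_or_eq_of_mem_addLeaf {b : Ltr A} {r : (M.addLeaf p a).Q}
    (he : (some q, b, r) ∈ (M.addLeaf p a).E) : (∃ y, (q, b, y) ∈ M.E) ∨ p = q ∧ b = a := by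
  rcases he with ⟨x, c, y, he, heq⟩ | heq | heq <;> cases heq
  · exact .inl ⟨y, he⟩
  · exact .inr ⟨rfl, rfl⟩

/- When `p = q` and `w = a s a⁻¹`, a new path from `p` to `q` labelled `w` would make `p`
nondeterministic, so `w` is read along a new edge labelled `a` and a new loop labelled `s`. -/
theorem exists_extension {w : List (Ltr A)} (hM : M.Dual) (hdet : M.Deterministic)
    (hw : IsReducedWord w) (hne : w ≠ []) (hp : ∀ a ∈ w.head?, ∀ r, (p, a, r) ∉ M.E)
    (hq : ∀ a ∈ w.getLast?, ∀ r, (q, a.inv, r) ∉ M.E) :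
    ∃ (B : Autom A) (φ : M.Q → B.Q), B.Dual ∧ B.Deterministic ∧ (Finite M.Q → Finite B.Q) ∧
      Injective φ ∧ M.IsHom B φ ∧ B.Path (φ p) w (φ q) := by
  induction hn : w.length using Nat.strong_induction_on generalizing M w with
  | _ n ih =>
  obtain ⟨a, w, rfl⟩ := List.exists_cons_of_ne_nil hne
  have hpa : ∀ r, (p, a, r) ∉ M.E := hp a rfl
  rcases eq_or_ne w [] with rfl | hw_ne
  · exact ⟨M.addEdge p a q, id, hM.addEdge, hdet.addEdge hpa (hq a rfl), id, injective_id,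
      ⟨rfl, fun _ _ _ => .inl⟩, path_singleton_iff.2 (.inr (.inl rfl))⟩
  have hdual' : (M.addLeaf p a).Dual := hM.addPoint.addEdge
  have hdet' := hdet.addLeaf hpa
  have hfin : Finite M.Q → Finite (M.addLeaf p a).Q := fun _ => inferInstanceAs (Finite (Option _))
  have hsome : Injective (some : M.Q → (M.addLeaf p a).Q) := Option.some_injective _
  have hwa := (IsReducedWord.append_iff (u := [a])).1 hw
  have hhead : ∀ b ∈ w.head?, ∀ r, (none, b, r) ∉ (M.addLeaf p a).E := fun b hb r he =>
    hwa.2.2 a rfl b hb (eq_inv_of_mem_addLeaf he)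
  by_cases hloop : p = q ∧ w.getLast? = some a.inv
  · obtain ⟨rfl, hlast⟩ := hloop
    obtain ⟨s, rfl⟩ := List.getLast?_eq_some_iff.1 hlast
    have hs : s ≠ [] := by
      rintro rfl
      exact hwa.2.2 a rfl a.inv rfl rfl
    obtain ⟨B, φ, hB, hBdet, hBfin, hinj, hφ, hpath⟩ := ih s.length (by simp [← hn]) (p := none)
      (q := none) hdual' hdet' hwa.2.1.left hs (fun b hb => hhead b (by simp [Option.mem_def.1 hb]))
      (fun b hb r he => (IsReducedWord.append_iff.1 hwa.2.1).2.2 b hb a.inv rfl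
        (eq_inv_of_mem_addLeaf he).symm) rfl
    have hedge := hφ.2 _ _ _ (M.edge_addLeaf p a)
    exact ⟨B, φ ∘ some, hB, hBdet, hBfin ∘ hfin, hinj.comp hsome,
      hφ.comp (M.isHom_addLeaf p a), path_cons_iff.2 ⟨_, hedge,
        hpath.append (path_singleton_iff.2 ((hB _ _ _).1 hedge))⟩⟩
  · obtain ⟨B, φ, hB, hBdet, hBfin, hinj, hφ, hpath⟩ := ih w.length (by simp [← hn]) (p := none)
      (q := some q) hdual' hdet' hwa.2.1 hw_ne hhead (fun b hb r he => by
        rcases mem_or_eq_of_mem_addLeaf he with ⟨y, hy⟩ | ⟨hpq, hba⟩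
        · exact hq b (by simp [List.getLast?_cons, Option.mem_def.1 hb]) y hy
        · exact hloop ⟨hpq, by rw [← hba, Ltr.inv_inv]; exact hb⟩) rfl
    exact ⟨B, φ ∘ some, hB, hBdet, hBfin ∘ hfin, hinj.comp hsome,
      hφ.comp (M.isHom_addLeaf p a), path_cons_iff.2 ⟨_, hφ.2 _ _ _ (M.edge_addLeaf p a), hpath⟩⟩

end Extension

section Steps

variable {A : Type} {M : Autom A} {L : Subgroup (FreeGroup A)} {g : FreeGroup A} {p : M.Q}

theorem Represents.exists_iStepAny [Finite M.Q] (hM : M.Represents L) (hg : g ∉ L)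
    (h0 : gluingCost L g = 0) :
    ∃ N, Finite N.Q ∧ M.IStepAny N ∧ N.Represents (L ⊔ zpowers g) := by
  obtain ⟨x, hx, y, hy, rfl⟩ := gluingCost_eq_zero_iff.1 h0
  obtain ⟨u, p, hu, rfl⟩ := hM.recognizes.exists_path_of_mem_convexCore hx
  obtain ⟨v, q, hv, rfl⟩ := hM.recognizes.exists_path_of_mem_convexCore hy
  have hpq : p ≠ q := by
    rintro rfl
    exact hg (hM.recognizes.mk_mul_mk_inv_mem hu hv)
  obtain ⟨N, hfin, hstep, hN⟩ := hM.recognizes.exists_iStep hpq hu hv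
  exact ⟨N, hfin, ⟨p, q, hstep⟩, hN⟩

theorem Represents.notMem_of_isShortestArc (hM : M.Represents L) {u w : List (Ltr A)}
    {y : FreeGroup A} (h : IsShortestArc L g (FreeGroup.mk u) w y) (hu : M.Path M.q0 u p) :
    ∀ a ∈ w.head?, ∀ r, (p, a, r) ∉ M.E := by
  intro a ha r he
  obtain ⟨w, rfl⟩ := List.head?_eq_some_iff.1 ha
  refine h.mul_mk_notMem ?_
  rw [← mk_append]
  exact hM.mk_mem_convexCore (hu.append (path_singleton_iff.2 he))

theorem Represents.exists_reStepAny [Finite M.Q] (hM : M.Represents L)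
    (hg : 0 < gluingCost L g) :
    ∃ N, Finite N.Q ∧ M.REStepAny N ∧ N.Represents (L ⊔ zpowers g) := by
  have hM' := hM.recognizes
  obtain ⟨x, w, y, h⟩ := exists_isShortestArc L g
  obtain ⟨u, p, hu, rfl⟩ := hM'.exists_path_of_mem_convexCore h.source_mem
  obtain ⟨v, q, hv, rfl⟩ := hM'.exists_path_of_mem_convexCore h.target_mem
  obtain ⟨N, hfin, hstep, hN⟩ := hM'.exists_expStep (h.ne_nil hg) hu hv
  rw [← h.eq_mul] at hN
  obtain ⟨B, ψ, hB, hdet, -, hψ_inj, hψ, hpath⟩ := exists_extension hM'.dual hM.1.1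
    h.isReducedWord (h.ne_nil hg) (hM.notMem_of_isShortestArc h hu) fun a ha =>
      hM.notMem_of_isShortestArc h.inv hv _ (by simp [wordInv, Option.mem_def.1 ha])
  have hBu := hψ.path hu
  have hBv := hψ.path hv
  rw [hψ.1] at hBu hBv
  have hgB : g ∈ B.langSubgroup hB :=
    ⟨u ++ w ++ wordInv v, (hBu.append hpath).append (hBv.inv hB),
      by rw [mk_append, mk_append, mk_wordInv, ← h.eq_mul]⟩
  obtain ⟨φ, hφ⟩ := hM.exists_isHom hN.recognizes hN.1.1 le_sup_left
  have hφ_inj := hφ.injective hψ hψ_inj hM'.connected hN.recognizes hB hdet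
    (sup_le (hψ.le_langSubgroup hM' hB) (Subgroup.zpowers_le.2 hgB))
  exact ⟨N, hfin, ⟨p, w, q, h.isReducedWord, hstep, φ, hφ_inj, hφ⟩, hN⟩

theorem Represents.exists_represents_sup_zpowers [Finite M.Q] (hM : M.Represents L)
    (g : FreeGroup A) : ∃ N : Autom A, Finite N.Q ∧ N.Represents (L ⊔ zpowers g) := by
  by_cases hg : g ∈ L
  · exact ⟨M, ‹_›, by rwa [sup_eq_left.2 (Subgroup.zpowers_le.2 hg)]⟩
  obtain hg0 | hg0 := (gluingCost L g).eq_zero_or_pos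
  · obtain ⟨N, hfin, -, hN⟩ := hM.exists_iStepAny hg hg0
    exact ⟨N, hfin, hN⟩
  · obtain ⟨N, hfin, -, hN⟩ := hM.exists_reStepAny hg0
    exact ⟨N, hfin, hN⟩

theorem exists_represents_bot (A : Type) : ∃ M : Autom A, Finite M.Q ∧ M.Represents ⊥ := by
  let M : Autom A := ⟨Unit, (), ∅⟩
  have hM : M.Dual := fun _ _ _ => Iff.rfl
  have hT : M.IsCosetLabelling ⊥ fun _ => (1 : FreeGroup A) := ⟨rfl, fun _ _ _ he => he.elim⟩
  refine ⟨M, inferInstanceAs (Finite Unit), (hT.recognizes hM ?_ bot_le).represents ?_ ?_⟩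
  · exact fun _ => ⟨[], path_nil_iff.2 rfl⟩
  · exact fun _ _ _ _ he => he.elim
  · exact fun _ => ⟨[], [], isReducedWord_iff_isReduced.2 .nil, path_nil_iff.2 rfl,
      path_nil_iff.2 rfl⟩

theorem exists_represents (hL : L.FG) : ∃ M : Autom A, Finite M.Q ∧ M.Represents L := by
  classical
  obtain ⟨T, rfl⟩ := hL
  induction T using Finset.induction_on with
  | empty => simpa using exists_represents_bot A
  | insert g T _ ih =>
    obtain ⟨M, _, hM⟩ := ih
    rw [Finset.coe_insert, Set.insert_eq, Set.union_comm, Subgroup.closure_union,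
      ← Subgroup.zpowers_eq_closure]
    exact hM.exists_represents_sup_zpowers g

theorem Represents.exists_steps [Finite M.Q] (hM : M.Represents L) {gs : List (FreeGroup A)}
    (h : IsOptimalSequence L gs) :
    ∃ d' ≤ gs.length, ∃ f : ℕ → Autom A, f 0 = M ∧
      (f gs.length).Represents (adjoinList L gs) ∧ (∀ i < d', IStepAny (f i) (f (i + 1))) ∧
      (∀ i, d' ≤ i → i < gs.length → REStepAny (f i) (f (i + 1))) ∧
      ∀ g ∈ gs.head?, 0 < gluingCost L g → d' = 0 := by
  induction gs generalizing L M with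
  | nil => exact ⟨0, le_rfl, fun _ => M, rfl, hM, by simp, by simp, by simp⟩
  | cons g gs ih =>
    obtain hg | hg := (gluingCost L g).eq_zero_or_pos
    · obtain ⟨N, _, hMN, hN⟩ := hM.exists_iStepAny h.head_notMem hg
      obtain ⟨d', hd', f, rfl, hend, hi, hre, -⟩ := ih hN h.tail
      refine ⟨d' + 1, Nat.succ_le_succ hd', fun | 0 => M | i + 1 => f i, rfl, hend, ?_, ?_, ?_⟩
      · rintro (_ | i) hid
        exacts [hMN, hi i (by omega)]
      · rintro (_ | i) hdi hid
        exacts [absurd hdi (by simp), hre i (by omega) (Nat.lt_of_succ_lt_succ hid)]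
      · simp [hg]
    · obtain ⟨N, _, hMN, hN⟩ := hM.exists_reStepAny hg
      obtain ⟨d', hd', f, rfl, hend, -, hre, h0⟩ := ih hN h.tail
      have hd0 : d' = 0 := by
        rcases gs with _ | ⟨k, gs⟩
        · exact Nat.le_zero.1 hd'
        · exact h0 k rfl (h.gluingCost_pos hg)
      refine ⟨0, Nat.zero_le _, fun | 0 => M | i + 1 => f i, rfl, hend, by simp, ?_, by simp⟩
      rintro (_ | i) - hid
      exacts [hMN, hre i (by omega) (Nat.lt_of_succ_lt_succ hid)]

end Steps

section ResidualFiniteness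

variable {A : Type} {M : Autom A} {p q : M.Q} {w : List (Ltr A)}

theorem exists_perm_of_deterministic [Finite M.Q] (hdual : M.Dual) (hdet : M.Deterministic)
    (a : A) : ∃ σ : Equiv.Perm M.Q, ∀ p q, (p, (a, true), q) ∈ M.E → σ q = p := by
  classical
  have := Fintype.ofFinite M.Q
  choose! f hf using fun q (hq : ∃ p, (p, (a, true), q) ∈ M.E) => hq
  have hinj : Set.InjOn f {q | ∃ p, (p, (a, true), q) ∈ M.E} := fun q hq q' hq' heq =>
    hdet _ _ _ _ (hf q hq) (heq ▸ hf q' hq')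
  obtain ⟨σ, hσ⟩ := Set.MapsTo.exists_equiv_extend_of_card_eq (t := Finset.univ) rfl
    (fun _ _ => by simp) hinj
  refine ⟨σ.trans (Equiv.subtypeUnivEquiv Finset.mem_univ), fun p q he => ?_⟩
  exact (hσ q ⟨p, he⟩).trans
    (hdet _ _ _ _ ((hdual _ _ _).1 (hf q ⟨p, he⟩)) ((hdual _ _ _).1 he))

theorem Path.lift_mk_apply (hdual : M.Dual) {χ : A → Equiv.Perm M.Q}
    (hχ : ∀ a p q, (p, (a, true), q) ∈ M.E → χ a q = p) (h : M.Path p w q) :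
    FreeGroup.lift χ (FreeGroup.mk w) q = p := by
  induction h with
  | nil => simp [← FreeGroup.one_eq_mk]
  | @cons p r q a w he _ ih =>
    rw [mk_cons, map_mul, Equiv.Perm.mul_apply, ih]
    obtain ⟨a, _ | _⟩ := a
    · simpa using (Equiv.symm_apply_eq (χ a)).2 (hχ _ _ _ ((hdual _ _ _).1 he)).symm
    · simpa using hχ _ _ _ he

end ResidualFiniteness

end Autom

section Rank

theorem residuallyFinite_freeGroup (A : Type) : Group.ResiduallyFinite (FreeGroup A) := by
  refine Group.residuallyFinite_of_forall_exists_finite_monoidHom fun g hg => ?_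
  obtain ⟨w, hw, rfl⟩ := exists_isReducedWord_mk g
  have hne : w ≠ [] := by
    rintro rfl
    exact hg rfl
  obtain ⟨M, φ, hdual, hdet, hfin, hinj, -, hpath⟩ := Autom.exists_extension
    (M := ⟨Bool, true, ∅⟩) (p := true) (q := false) (by simp [Autom.Dual])
    (by simp [Autom.Deterministic]) hw hne (by simp) (by simp)
  have := hfin inferInstance
  choose χ hχ using Autom.exists_perm_of_deterministic hdual hdet
  refine ⟨Equiv.Perm M.Q, inferInstance, inferInstance, FreeGroup.lift χ, fun h1 => ?_⟩
  have := hpath.lift_mk_apply hdual hχ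
  rw [h1, Equiv.Perm.one_apply] at this
  exact Bool.false_ne_true (hinj this)

theorem finite_monoidHom (G P : Type*) [Group G] [Group.FG G] [Group P] [Finite P] :
    Finite (G →* P) := by
  obtain ⟨S, hS⟩ := Group.FG.out (G := G)
  refine Finite.of_injective (fun (f : G →* P) (s : S) => f s) fun f f' h => ?_
  exact MonoidHom.eq_of_eqOn_dense hS fun s hs => congrFun h ⟨s, hs⟩

/-- Malcev: precomposition with a surjective endomorphism permutes the finitely many
homomorphisms to a finite group, so these all vanish on its kernel. -/
theorem injective_of_surjective_of_residuallyFinite {G : Type*} [Group G] [Group.FG G]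
    [Group.ResiduallyFinite G] {φ : G →* G} (hφ : Surjective φ) : Injective φ := by
  rw [injective_iff_map_eq_one]
  intro g hg
  by_contra hne
  obtain ⟨N, hN⟩ := Group.exists_finiteIndexNormalSubgroup_notMem g hne
  have := finite_monoidHom G (G ⧸ N.toSubgroup)
  have hinj : Injective fun f : G →* G ⧸ N.toSubgroup => f.comp φ := fun f f' =>
    (MonoidHom.cancel_right hφ).1
  obtain ⟨f, hf⟩ := Finite.surjective_of_injective hinj (QuotientGroup.mk' N.toSubgroup)
  apply hN
  have : QuotientGroup.mk' N.toSubgroup g = 1 := by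
    rw [← hf, MonoidHom.comp_apply, hg, map_one]
  exact (QuotientGroup.eq_one_iff g).1 this

theorem card_le_of_freeGroup_surjective {α β : Type*} [Finite β] {φ : FreeGroup β →* FreeGroup α}
    (hφ : Surjective φ) : Finite α ∧ Nat.card α ≤ Nat.card β := by
  classical
  have hinj : Injective fun f : α → Multiplicative (ZMod 2) =>
      FreeGroup.lift.symm ((FreeGroup.lift f).comp φ) := fun f f' h =>
    FreeGroup.lift.injective ((MonoidHom.cancel_right hφ).1 (FreeGroup.lift.symm.injective h))
  have : Finite (α → Multiplicative (ZMod 2)) := .of_injective _ hinj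
  have hα : Finite α := .of_injective
    (fun a => (Pi.mulSingle a (.ofAdd 1) : α → Multiplicative (ZMod 2))) fun a b hab => by
      by_contra hne
      simpa [Pi.mulSingle_apply, hne] using congrFun hab a
  refine ⟨hα, ?_⟩
  have hcard := Nat.card_le_card_of_injective _ hinj
  rw [Nat.card_fun, Nat.card_fun, Nat.card_congr Multiplicative.toAdd, Nat.card_zmod] at hcard
  exact (Nat.pow_le_pow_iff_right Nat.one_lt_two).1 hcard

namespace IsFreeBasis

variable {G : Type} [Group G] {S T : Set G} {L : Subgroup G}

theorem exists_surjective (hS : IsFreeBasis S L) (hT : Subgroup.closure T = L) :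
    ∃ φ : FreeGroup T →* FreeGroup S, Surjective φ ∧
      (FreeGroup.lift ((↑) : S → G)).comp φ = FreeGroup.lift ((↑) : T → G) := by
  have hrange : (FreeGroup.lift ((↑) : S → G)).range = (FreeGroup.lift ((↑) : T → G)).range := by
    rw [← FreeGroup.closure_eq_range, ← FreeGroup.closure_eq_range, hS.1, hT]
  choose e he using fun t : T => hrange.ge ⟨FreeGroup.of t, FreeGroup.lift_apply_of⟩
  have hcomp : (FreeGroup.lift ((↑) : S → G)).comp (FreeGroup.lift e) =
      FreeGroup.lift ((↑) : T → G) := FreeGroup.ext_hom _ _ (by simp [he])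
  refine ⟨FreeGroup.lift e, fun x => ?_, hcomp⟩
  obtain ⟨y, hy⟩ := hrange.le ⟨x, rfl⟩
  exact ⟨y, hS.2 (by rw [← hy, ← hcomp, MonoidHom.comp_apply])⟩

theorem ncard_le (hS : IsFreeBasis S L) (hT : Subgroup.closure T = L) (hfin : T.Finite) :
    S.Finite ∧ S.ncard ≤ T.ncard := by
  have := hfin.to_subtype
  obtain ⟨φ, hφ, -⟩ := hS.exists_surjective hT
  exact card_le_of_freeGroup_surjective hφ

theorem of_ncard_le (hS : IsFreeBasis S L) (hT : Subgroup.closure T = L) (hfin : T.Finite)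
    (hcard : T.ncard ≤ S.ncard) : IsFreeBasis T L := by
  have := hfin.to_subtype
  have : Finite S := (hS.ncard_le hT hfin).1
  obtain ⟨φ, hφ, hcomp⟩ := hS.exists_surjective hT
  obtain ⟨e⟩ := Finite.card_eq.1 ((hS.ncard_le hT hfin).2.antisymm hcard)
  have := residuallyFinite_freeGroup T
  have hinj : Injective ((FreeGroup.freeGroupCongr e).toMonoidHom.comp φ) :=
    injective_of_surjective_of_residuallyFinite ((FreeGroup.freeGroupCongr e).surjective.comp hφ)
  refine ⟨hT, ?_⟩
  rw [← hcomp, MonoidHom.coe_comp]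
  exact hS.2.comp (Injective.of_comp hinj)

theorem finite (hS : IsFreeBasis S L) (hL : L.FG) : S.Finite := by
  obtain ⟨T, hT⟩ := hL
  exact (hS.ncard_le hT T.finite_toSet).1

theorem rk_eq (hS : IsFreeBasis S L) (hL : L.FG) : rk L = S.ncard := by
  obtain ⟨S', hS', heq⟩ := Nat.sInf_mem (s := {n | ∃ S : Set G, IsFreeBasis S L ∧ S.ncard = n})
    ⟨_, S, hS, rfl⟩
  calc rk L = S'.ncard := heq.symm
    _ = S.ncard := (hS'.ncard_le hS.1 (hS.finite hL)).2.antisymm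
      (hS.ncard_le hS'.1 (hS'.finite hL)).2

end IsFreeBasis

theorem isFreeBasis_range_of_injective_lift {G ι : Type} [Group G] {b : ι → G}
    (h : Injective (FreeGroup.lift b)) : IsFreeBasis (Set.range b) (FreeGroup.lift b).range := by
  refine ⟨FreeGroup.range_lift_eq_closure.symm, ?_⟩
  have hb : Injective b := fun i j hij => FreeGroup.of_injective (h (by simpa using hij))
  let e := FreeGroup.freeGroupCongr (Equiv.ofInjective b hb)
  have hcomp : (FreeGroup.lift ((↑) : Set.range b → G)).comp e.toMonoidHom = FreeGroup.lift b :=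
    FreeGroup.ext_hom _ _ (by simp [e])
  rw [← hcomp, MonoidHom.coe_comp] at h
  exact h.of_comp_right e.surjective

theorem exists_isFreeBasis {A : Type} (L : Subgroup (FreeGroup A)) : ∃ S, IsFreeBasis S L := by
  let e := IsFreeGroup.mulEquiv L
  let b (i : IsFreeGroup.Generators L) : FreeGroup A := e (FreeGroup.of i)
  have hb : FreeGroup.lift b = L.subtype.comp e.toMonoidHom :=
    FreeGroup.ext_hom _ _ (by simp [b])
  have hrange : (FreeGroup.lift b).range = L := by
    rw [hb, MonoidHom.range_comp, MonoidHom.range_eq_top.2 e.surjective, ← MonoidHom.range_eq_map,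
      L.range_subtype]
  have hinj : Injective (FreeGroup.lift b) := by
    rw [hb]
    exact L.subtype_injective.comp e.injective
  exact ⟨_, hrange ▸ isFreeBasis_range_of_injective_lift hinj⟩

theorem rk_le_ncard {A : Type} {L : Subgroup (FreeGroup A)} {T : Set (FreeGroup A)}
    (hT : Subgroup.closure T = L) (hfin : T.Finite) : rk L ≤ T.ncard := by
  obtain ⟨S, hS⟩ := exists_isFreeBasis L
  rw [hS.rk_eq ((Subgroup.fg_iff L).2 ⟨T, hT, hfin⟩)]
  exact (hS.ncard_le hT hfin).2

theorem isFreeBasis_of_ncard_le_rk {A : Type} {L : Subgroup (FreeGroup A)}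
    {T : Set (FreeGroup A)} (hT : Subgroup.closure T = L) (hfin : T.Finite)
    (hcard : T.ncard ≤ rk L) : IsFreeBasis T L := by
  obtain ⟨S, hS⟩ := exists_isFreeBasis L
  rw [hS.rk_eq ((Subgroup.fg_iff L).2 ⟨T, hT, hfin⟩)] at hcard
  exact hS.of_ncard_le hT hfin hcard

end Rank

section FreeFactors

variable {A : Type} {H K : Subgroup (FreeGroup A)} {B : Set (FreeGroup A)}
  {gs : List (FreeGroup A)}

theorem Autom.Recognizes.exists_adjoinList {f : ℕ → Autom A} {n : ℕ} (h : (f 0).Recognizes H)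
    (hf : ∀ i < n, IStepAny (f i) (f (i + 1)) ∨ REStepAny (f i) (f (i + 1))) :
    ∃ gs : List (FreeGroup A), gs.length = n ∧ (f n).Recognizes (adjoinList H gs) := by
  induction n with
  | zero => exact ⟨[], rfl, h⟩
  | succ n ih =>
    obtain ⟨gs, hlen, hgs⟩ := ih fun i hi => hf i (hi.trans n.lt_succ_self)
    obtain ⟨g, hg⟩ : ∃ g, (f (n + 1)).Recognizes (adjoinList H gs ⊔ zpowers g) :=
      (hf n n.lt_succ_self).elim hgs.exists_of_iStepAny hgs.exists_of_reStepAny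
    exact ⟨gs ++ [g], by simp [hlen], by simpa [adjoinList] using hg⟩

theorem finite_union_setOf_mem_and_ncard_le (hB : B.Finite) (gs : List (FreeGroup A)) :
    (B ∪ {g | g ∈ gs}).Finite ∧ (B ∪ {g | g ∈ gs}).ncard ≤ B.ncard + gs.length := by
  classical
  refine ⟨hB.union gs.finite_toSet, (Set.ncard_union_le _ _).trans (Nat.add_le_add_left ?_ _)⟩
  rw [← List.coe_toFinset, Set.ncard_coe_finset]
  exact gs.toFinset_card_le

theorem IsFreeBasis.closure_union_eq_adjoinList (hB : IsFreeBasis B H) :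
    Subgroup.closure (B ∪ {g | g ∈ gs}) = adjoinList H gs := by
  rw [Subgroup.closure_union, hB.1, adjoinList_eq_sup_closure]

theorem rk_adjoinList_le (hH : H.FG) : rk (adjoinList H gs) ≤ rk H + gs.length := by
  obtain ⟨B, hB⟩ := exists_isFreeBasis H
  obtain ⟨hfin, hcard⟩ := finite_union_setOf_mem_and_ncard_le (hB.finite hH) gs
  rw [hB.rk_eq hH]
  exact (rk_le_ncard hB.closure_union_eq_adjoinList hfin).trans hcard

theorem freeFactor_adjoinList (hH : H.FG) (hrank : rk H + gs.length ≤ rk (adjoinList H gs)) :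
    FreeFactor H (adjoinList H gs) := by
  obtain ⟨B, hB⟩ := exists_isFreeBasis H
  obtain ⟨hfin, hcard⟩ := finite_union_setOf_mem_and_ncard_le (hB.finite hH) gs
  rw [hB.rk_eq hH] at hrank
  exact ⟨B, _, hB, isFreeBasis_of_ncard_le_rk hB.closure_union_eq_adjoinList hfin
    (hcard.trans hrank), Set.subset_union_left⟩

theorem FreeFactor.exists_adjoinList_eq (h : FreeFactor H K) (hH : H.FG) (hK : K.FG) :
    ∃ gs, adjoinList H gs = K ∧ rk K = rk H + gs.length := by
  obtain ⟨B, C, hB, hC, hBC⟩ := h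
  have hfin : (C \ B).Finite := (hC.finite hK).sdiff
  refine ⟨hfin.toFinset.toList, ?_, ?_⟩
  · have hset : {g | g ∈ hfin.toFinset.toList} = C \ B := by ext; simp
    rw [← hB.closure_union_eq_adjoinList, hset, Set.union_sdiff_cancel hBC, hC.1]
  · rw [hC.rk_eq hK, hB.rk_eq hH, Finset.length_toList, ← Set.ncard_eq_toFinset_card _ hfin,
      add_comm, Set.ncard_sdiff_add_ncard_of_subset hBC (hC.finite hK)]

theorem FreeFactor.exists_isOptimalSequence (h : FreeFactor H K) (hH : H.FG) (hK : K.FG) :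
    ∃ gs, IsOptimalSequence H gs ∧ adjoinList H gs = K ∧ rk K = rk H + gs.length := by
  obtain ⟨hs, rfl, hrank⟩ := h.exists_adjoinList_eq hH hK
  obtain ⟨gs, heq, hopt⟩ := _root_.exists_isOptimalSequence H hs
  have hle := heq ▸ rk_adjoinList_le hH (gs := gs)
  exact ⟨gs, hopt, heq, hle.antisymm (by have := hopt.length_le heq.symm; omega)⟩

end FreeFactors

/-- Theorem 3.1: with `d = rank K - rank H > 0`, `H ≤ff K` iff `Γ_A(H)` can be
transformed into `Γ_A(K)` by a sequence of `d' ≤ d` i-steps followed by `d - d'`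
reduced expansions. -/
theorem free_factor_iff_isteps_then_restpes
    {A : Type} (H K : Subgroup (FreeGroup A)) (hHfg : H.FG) (hKfg : K.FG)
    (d : ℕ) (hd : 0 < d) (hrank : rk K = rk H + d) :
    FreeFactor H K ↔
      ∃ d' ≤ d, ∃ f : ℕ → Autom A,
        (f 0).Represents H ∧ (f d).Represents K ∧
        (∀ i < d', Autom.IStepAny (f i) (f (i + 1))) ∧
        (∀ i, d' ≤ i → i < d → Autom.REStepAny (f i) (f (i + 1))) := by
  constructor
  · intro h
    obtain ⟨gs, hopt, rfl, hlen⟩ := h.exists_isOptimalSequence hHfg hKfg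
    obtain rfl : d = gs.length := by omega
    obtain ⟨M, _, hM⟩ := Autom.exists_represents hHfg
    obtain ⟨d', hd', f, rfl, hend, hi, hre, -⟩ := hM.exists_steps hopt
    exact ⟨d', hd', f, hM, hend, hi, hre⟩
  · rintro ⟨d', -, f, hH, hK, hi, hre⟩
    obtain ⟨gs, rfl, hgs⟩ := hH.recognizes.exists_adjoinList (n := d) fun i hid =>
      (lt_or_ge i d').imp (hi i) fun hdi => hre i hdi hid
    obtain rfl : adjoinList H gs = K := hgs.unique hK.recognizes
    exact freeFactor_adjoinList hHfg hrank.ge
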